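/- There exists a constant C > 0, depending only on d and α, such that for every ε ∈ (0,1/20) and every x ∈ Π_ε ∩ F: the fractional Laplacian Δ^{α/2}(h·s_ε)(x) exists and |Δ^{α/2}(h·s_ε)(x) + h(x)| ≤ C·ω(ε). -/

import Mathlib

open MeasureTheory Metric Real Set Filter RealInnerProductSpace
open scoped ENNReal

noncomputable section

/-- Euclidean space ℝ^d. -/
abbrev Ed (d : ℕ) := EuclideanSpace ℝ (Fin d)

/-- The constant `A_{d,α}`. -/
noncomputable def fracConst (d : ℕ) (α : ℝ) : ℝ :=
  α * 2 ^ (α - 1) * π ^ (-(d : ℝ) / 2) * Real.Gamma (((d : ℝ) + α) / 2) / Real.Gamma (1 - α / 2)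

/-- The fractional Laplacian `Δ^{α/2} Φ (x)` exists and equals `L`. -/
def fracLapAt (d : ℕ) (α : ℝ) (Φ : Ed d → ℝ) (x : Ed d) (L : ℝ) : Prop :=
  Filter.Tendsto
    (fun ε : ℝ => fracConst d α *
      ∫ y in {y : Ed d | ε < ‖y - x‖}, (Φ y - Φ x) * ‖y - x‖ ^ (-(d : ℝ) - α))
    (nhdsWithin 0 (Set.Ioi 0)) (nhds L)

/-- The last coordinate of a vector in ℝ^d. -/
def lastCoord (d : ℕ) (x : Ed d) : ℝ :=
  if h : 0 < d then x ⟨d - 1, Nat.sub_lt h Nat.one_pos⟩ else 0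

/-- The unit vector `e_d = (0,…,0,1)`. -/
def eLast (d : ℕ) : Ed d :=
  if h : 0 < d then EuclideanSpace.single ⟨d - 1, Nat.sub_lt h Nat.one_pos⟩ (1 : ℝ) else 0

/-- The right circular cone `Γ_Θ` of angle `Θ`. -/
def cone (d : ℕ) (Θ : ℝ) : Set (Ed d) := {x | ‖x‖ * Real.cos Θ < lastCoord d x}

/-- The unit sphere `S^{d-1}` in ℝ^d. -/
def unitSphere (d : ℕ) : Set (Ed d) := Metric.sphere (0 : Ed d) 1

/-- The spherical cap `B_Θ`. -/
def capB (d : ℕ) (Θ : ℝ) : Set (Ed d) := {θ | θ ∈ unitSphere d ∧ Real.cos Θ < lastCoord d θ}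

/-- The surface measure `σ`: the (d-1)-dimensional Hausdorff measure. -/
noncomputable def sphMeasure (d : ℕ) : Measure (Ed d) := μH[(d : ℝ) - 1]

/-- The kernel `u_λ(t)`. -/
noncomputable def uKernel (d : ℕ) (α lam t : ℝ) : ℝ :=
  ∫ r in Set.Ioi (0 : ℝ), r ^ ((d : ℝ) + lam - 1) * (r ^ 2 - 2 * r * t + 1) ^ (-((d : ℝ) + α) / 2)

/-- The kernel `u_λ(t)` as a value in `[0,∞]`. -/
noncomputable def uKernelE (d : ℕ) (α lam t : ℝ) : ℝ≥0∞ :=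
  ∫⁻ r in Set.Ioi (0 : ℝ),
    ENNReal.ofReal (r ^ ((d : ℝ) + lam - 1) * (r ^ 2 - 2 * r * t + 1) ^ (-((d : ℝ) + α) / 2))

/-- The spherical fractional Laplacian `Δ_S^{α/2} φ (η)` exists and equals `L`. -/
def sphFracLapAt (d : ℕ) (α : ℝ) (φ : Ed d → ℝ) (η : Ed d) (L : ℝ) : Prop :=
  Filter.Tendsto
    (fun ε : ℝ => fracConst d α *
      ∫ θ in {θ : Ed d | θ ∈ unitSphere d ∧ ⟪θ, η⟫ ≤ Real.cos ε},
        (φ θ - φ η) * uKernel d α 0 ⟪θ, η⟫ ∂(sphMeasure d))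
    (nhdsWithin 0 (Set.Ioi 0)) (nhds L)

/-- The integrand of the radial operator `R_λ`. -/
noncomputable def RopIntegrand (d : ℕ) (α lam : ℝ) (φ : Ed d → ℝ) (η θ : Ed d) : ℝ :=
  φ θ * (uKernel d α lam ⟪θ, η⟫ - uKernel d α 0 ⟪θ, η⟫)

/-- The radial operator `R_λ φ (η)`. -/
noncomputable def Rop (d : ℕ) (α lam : ℝ) (φ : Ed d → ℝ) (η : Ed d) : ℝ :=
  fracConst d α * ∫ θ in unitSphere d, RopIntegrand d α lam φ η θ ∂(sphMeasure d)

/-- The modulus `ω`. -/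
noncomputable def omegaFn (α Θ : ℝ) : ℝ :=
  if α < 1 then Θ ^ α else if α = 1 then Θ * |Real.log Θ| else Θ

/-- The Euler beta function. -/
noncomputable def eulerBeta (a b : ℝ) : ℝ := Real.Gamma a * Real.Gamma b / Real.Gamma (a + b)

/-- The constant `B_{d,α}`. -/
noncomputable def Bconst (d : ℕ) (α : ℝ) : ℝ :=
  Real.Gamma (((d : ℝ) + α) / 2) / (π ^ ((3 : ℝ) / 2) * Real.Gamma (((d : ℝ) - 1 + α) / 2)) *
    Real.sin (π * α / 2) * eulerBeta (1 + α / 2) (((d : ℝ) - 1) / 2)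

/-- The constant `C_{d-1,α}`. -/
noncomputable def Cexit (d : ℕ) (α : ℝ) : ℝ :=
  Real.Gamma (((d : ℝ) - 1) / 2) /
    (2 ^ α * Real.Gamma (((d : ℝ) - 1 + α) / 2) * Real.Gamma (1 + α / 2))

/-- The constant `C̃_{d,α}`. -/
noncomputable def Ctilde (d : ℕ) (α : ℝ) : ℝ :=
  π ^ (((d : ℝ) - 1) / 2) / Real.Gamma (((d : ℝ) - 1) / 2) * Cexit d α *
    eulerBeta (1 + α / 2) (((d : ℝ) - 1) / 2)

/-- The norm `|ỹ|` of the first `d-1` coordinates of `y`. -/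
noncomputable def tnorm (d : ℕ) (y : Ed d) : ℝ :=
  Real.sqrt (∑ i : Fin d, if (i : ℕ) < d - 1 then (y i) ^ 2 else 0)

/-- The function `s_ε`. -/
noncomputable def sExit (d : ℕ) (α ε : ℝ) (y : Ed d) : ℝ :=
  Cexit d α * (max (ε ^ 2 - tnorm d y ^ 2) 0) ^ (α / 2)

/-- The cylinder `Π_ε`. -/
def cylPi (d : ℕ) (ε : ℝ) : Set (Ed d) := {y | tnorm d y < ε}

/-- The hyperplane `F = {y : y_d = 1}`. -/
def hyperF (d : ℕ) : Set (Ed d) := {y | lastCoord d y = 1}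

/-- The Riesz kernel `h(y) = |y|^{α-d}`. -/
noncomputable def rieszH (d : ℕ) (α : ℝ) (y : Ed d) : ℝ := ‖y‖ ^ (α - (d : ℝ))

/-- The inversion `T x = x/|x|²`. -/
noncomputable def inversion (d : ℕ) (x : Ed d) : Ed d := (‖x‖ ^ 2)⁻¹ • x

/-- The shifted cone `V_Θ = Γ_Θ + e_d/2`. -/
def Vcone (d : ℕ) (Θ : ℝ) : Set (Ed d) := {y | y - (1 / 2 : ℝ) • eLast d ∈ cone d Θ}

/-- The spindle `L_ε = T(V_Θ)` with `ε = tan(Θ/2)`, i.e. `Θ = 2 arctan ε`. -/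
def Lspindle (d : ℕ) (ε : ℝ) : Set (Ed d) := inversion d '' Vcone d (2 * Real.arctan ε)

/-- The curvilinear projection `y* = T(e_d/2 + (Ty - e_d/2)/(2|Ty - e_d/2|))`. -/
noncomputable def ystar (d : ℕ) (y : Ed d) : Ed d :=
  inversion d ((1 / 2 : ℝ) • eLast d +
    (2 * ‖inversion d y - (1 / 2 : ℝ) • eLast d‖)⁻¹ • (inversion d y - (1 / 2 : ℝ) • eLast d))

open scoped Classical in
/-- The function `s*_ε`. -/
noncomputable def sStar (d : ℕ) (α ε : ℝ) (y : Ed d) : ℝ :=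
  if y ∈ Lspindle d ε then Cexit d α * (max (ε ^ 2 - tnorm d (ystar d y) ^ 2) 0) ^ (α / 2)
  else 0

open scoped Classical in
/-- The function `u = K(h s*_ε)`, i.e. `u(y) = s*_ε(Ty)`, `u(0) = 0`. -/
noncomputable def uFn (d : ℕ) (α ε : ℝ) (y : Ed d) : ℝ :=
  if y = 0 then 0 else sStar d α ε (inversion d y)

/-- The spherical profile `φ_Θ`. -/
noncomputable def profileFn (d : ℕ) (α Θ : ℝ) (θ : Ed d) : ℝ :=
  2 ^ α * Cexit d α *
    (max (Real.tan (Θ / 2) ^ 2 - ‖eLast d - θ‖ ^ 2 / ‖eLast d + θ‖ ^ 2) 0) ^ (α / 2)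

/-- Laplacian on ℝ^d as the sum of pure second partial derivatives. -/
noncomputable def lapE (d : ℕ) (u : Ed d → ℝ) (x : Ed d) : ℝ :=
  ∑ i : Fin d,
    iteratedFDeriv ℝ 2 u x ![EuclideanSpace.single i (1 : ℝ), EuclideanSpace.single i (1 : ℝ)]

/-- Laplacian on ℝ^d × ℝ as the sum of the d+1 pure second partial derivatives. -/
noncomputable def lapProd (d : ℕ) (U : Ed d × ℝ → ℝ) (p : Ed d × ℝ) : ℝ :=
  (∑ i : Fin d, iteratedFDeriv ℝ 2 U p
      ![(EuclideanSpace.single i (1 : ℝ), (0 : ℝ)), (EuclideanSpace.single i (1 : ℝ), (0 : ℝ))]) +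
    iteratedFDeriv ℝ 2 U p ![((0 : Ed d), (1 : ℝ)), ((0 : Ed d), (1 : ℝ))]

/-- The Poisson kernel `P_t(x)` for the upper half-space. -/
noncomputable def poissonK (d : ℕ) (t : ℝ) (x : Ed d) : ℝ :=
  Real.Gamma (((d : ℝ) + 1) / 2) / π ^ (((d : ℝ) + 1) / 2) * t *
    (‖x‖ ^ 2 + t ^ 2) ^ (-((d : ℝ) + 1) / 2)

end
theorem integral_rpow_mul_one_sub_rpow {a : ℝ} (ha : 0 < a) (ha1 : a < 1) :
    ∫ x in Ioo (0 : ℝ) 1, x ^ (a - 1) * (1 - x) ^ (-a) = Gamma a * Gamma (1 - a) := by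
  have h := ProbabilityTheory.beta_eq_betaIntegralReal a (1 - a) ha (by linarith)
  have h1 : ProbabilityTheory.beta a (1 - a) = Gamma a * Gamma (1 - a) := by
    simp [ProbabilityTheory.beta]
  have h2 : Complex.betaIntegral (a : ℂ) ((1 - a : ℝ) : ℂ) =
      ((∫ x in Ioo (0 : ℝ) 1, x ^ (a - 1) * (1 - x) ^ (-a) : ℝ) : ℂ) := by
    rw [Complex.betaIntegral, intervalIntegral.integral_of_le zero_le_one,
      integral_Ioc_eq_integral_Ioo, ← integral_complex_ofReal]
    refine setIntegral_congr_fun measurableSet_Ioo fun x hx => ?_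
    rw [Complex.ofReal_mul, Complex.ofReal_cpow hx.1.le, Complex.ofReal_cpow (by linarith [hx.2])]
    push_cast
    ring_nf
  rw [h2, Complex.ofReal_re] at h
  rw [← h, h1]

theorem integral_Ioi_rpow_mul_div_add {a c : ℝ} (ha : 0 < a) (ha1 : a < 1) (hc : 0 < c) :
    ∫ k in Ioi (0 : ℝ), k ^ (a - 1) * (c / (k + c)) = c ^ a * (Gamma a * Gamma (1 - a)) := by
  have himg : (fun x : ℝ => c * x / (1 - x)) '' Ioo 0 1 = Ioi 0 := by
    ext k
    constructor
    · rintro ⟨x, hx, rfl⟩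
      have := hx.1
      have : 0 < 1 - x := by linarith [hx.2]
      simp only [mem_Ioi]
      positivity
    · intro hk
      have hk' : 0 < k := hk
      refine ⟨k / (k + c), ⟨by positivity, by rw [div_lt_one (by positivity)]; linarith⟩, ?_⟩
      have e : 1 - k / (k + c) = c / (k + c) := by field_simp; ring
      simp only [e]
      field_simp
  have hderiv : ∀ x ∈ Ioo (0 : ℝ) 1,
      HasDerivWithinAt (fun x : ℝ => c * x / (1 - x)) (c / (1 - x) ^ 2) (Ioo 0 1) x := by
    intro x hx
    have h0 : 1 - x ≠ 0 := by linarith [hx.2]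
    have := (((hasDerivAt_id x).const_mul c).div ((hasDerivAt_id x).const_sub 1) h0)
    refine (this.congr_deriv ?_).hasDerivWithinAt
    simp only [id]
    field_simp
    ring
  have hmono : MonotoneOn (fun x : ℝ => c * x / (1 - x)) (Ioo 0 1) := by
    intro x hx y hy hxy
    have : 0 < 1 - y := by linarith [hy.2]
    have := hy.1
    simp only
    gcongr
  rw [← himg, integral_image_eq_integral_deriv_smul_of_monotoneOn measurableSet_Ioo hderiv hmono,
    ← integral_rpow_mul_one_sub_rpow ha ha1, ← integral_const_mul]
  refine setIntegral_congr_fun measurableSet_Ioo fun x hx => ?_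
  have hx0 : 0 < x := hx.1
  have hx1 : 0 < 1 - x := by linarith [hx.2]
  simp only [smul_eq_mul]
  have e1 : c * x / (1 - x) + c = c / (1 - x) := by field_simp; ring
  rw [e1, div_rpow (by positivity) hx1.le, mul_rpow hc.le hx0.le, rpow_sub_one hc.ne',
    rpow_sub_one hx1.ne', rpow_neg hx1.le]
  have := rpow_pos_of_pos hx1 a
  field_simp

theorem integrableOn_Ioi_rpow_mul_div_add {a c : ℝ} (ha : 0 < a) (ha1 : a < 1) (hc : 0 < c) :
    IntegrableOn (fun k : ℝ => k ^ (a - 1) * (c / (k + c))) (Ioi 0) := by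
  by_contra h
  have h1 := integral_Ioi_rpow_mul_div_add ha ha1 hc
  rw [integral_undef h] at h1
  have := Gamma_pos_of_pos ha
  have := Gamma_pos_of_pos (sub_pos.2 ha1)
  have : 0 < c ^ a * (Gamma a * Gamma (1 - a)) := by positivity
  linarith

theorem tendsto_rpow_mul_comp_inv {b : ℝ} (hb : b < 1) {ρ : ℝ → ℝ} (hρ : DifferentiableAt ℝ ρ 0)
    (h0 : ρ 0 = 0) : Tendsto (fun M : ℝ => M ^ b * ρ M⁻¹) atTop (nhds 0) := by
  have h1 : (fun h => ρ h) =O[nhds 0] (fun h : ℝ => h) := by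
    have := hρ.hasDerivAt.isBigO_sub
    simpa [h0] using this
  have h2 : (fun M : ℝ => M ^ b * ρ M⁻¹) =O[atTop] (fun M : ℝ => M ^ b * M⁻¹) :=
    (Asymptotics.isBigO_refl _ _).mul (h1.comp_tendsto tendsto_inv_atTop_zero)
  refine h2.trans_tendsto ?_
  have h3 := tendsto_rpow_neg_atTop (y := 1 - b) (by linarith)
  refine h3.congr' ?_
  filter_upwards [eventually_gt_atTop 0] with M hM
  rw [← rpow_neg_one, ← rpow_add hM]
  congr 1; ring

theorem setIntegral_Ioi_quadratic_rpow {a P γ β δ : ℝ} (ha : 0 < a) (hP : 0 < P) (hγ : 0 < γ)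
    (hδ : 0 < δ) (hN : √(β ^ 2 + P * γ) ≤ P / δ - β) :
    ∫ t in Ioi δ, (max (P - 2 * β * t - γ * t ^ 2) 0) ^ a * t ^ (-1 - 2 * a) =
      P ^ (-a) * ∫ w in √(β ^ 2 + P * γ)..(P / δ - β), (w ^ 2 - (β ^ 2 + P * γ)) ^ a / (w + β) := by
  set D := β ^ 2 + P * γ with hD
  have hDβ : β ^ 2 < D := by have := mul_pos hP hγ; linarith
  have hr : |β| < √D := by rw [← sqrt_sq_eq_abs]; exact sqrt_lt_sqrt (sq_nonneg _) hDβ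
  have hr1 := (abs_lt.1 hr).1
  have hr2 := (abs_lt.1 hr).2
  have hr0 : 0 ≤ D := (sq_nonneg β).trans hDβ.le
  have himg : (fun t : ℝ => P / t - β) '' Ioi δ = Ioo (-β) (P / δ - β) := by
    ext w
    constructor
    · rintro ⟨t, ht, rfl⟩
      have ht' : δ < t := ht
      have : 0 < t := hδ.trans ht
      have h1 : 0 < P / t := by positivity
      have h2 : P / t < P / δ := by gcongr
      constructor <;> simp only <;> linarith
    · rintro ⟨h1, h2⟩
      have h3 : 0 < w + β := by linarith
      refine ⟨P / (w + β), ?_, by simp only; field_simp; ring⟩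
      rw [mem_Ioi, lt_div_iff₀ h3]
      have : w + β < P / δ := by linarith
      rw [lt_div_iff₀ hδ] at this
      linarith
  have hderiv : ∀ t ∈ Ioi δ,
      HasDerivWithinAt (fun t : ℝ => P / t - β) (-(P / t ^ 2)) (Ioi δ) t := by
    intro t ht
    have h0 : t ≠ 0 := (hδ.trans ht).ne'
    have := (((hasDerivAt_inv h0).const_mul P).sub_const β)
    refine (this.congr_deriv ?_).hasDerivWithinAt
    field_simp
  have hanti : AntitoneOn (fun t : ℝ => P / t - β) (Ioi δ) := by
    intro s hs t ht hst
    have : 0 < s := hδ.trans hs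
    simp only
    gcongr
  have key := integral_image_eq_integral_deriv_smul_of_antitoneOn measurableSet_Ioi hderiv hanti
    (fun w => P ^ (-a) * ((max (w ^ 2 - D) 0) ^ a / (w + β)))
  rw [himg] at key
  have e1 : ∫ t in Ioi δ, (max (P - 2 * β * t - γ * t ^ 2) 0) ^ a * t ^ (-1 - 2 * a) =
      ∫ w in Ioo (-β) (P / δ - β), P ^ (-a) * ((max (w ^ 2 - D) 0) ^ a / (w + β)) := by
    rw [key]
    refine setIntegral_congr_fun measurableSet_Ioi fun t ht => ?_
    have ht0 : 0 < t := hδ.trans ht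
    have e2 : max (P - 2 * β * t - γ * t ^ 2) 0 = t ^ 2 / P * max ((P / t - β) ^ 2 - D) 0 := by
      rw [mul_max_of_nonneg _ _ (by positivity : 0 ≤ t ^ 2 / P), mul_zero]
      congr 1
      rw [hD]
      field_simp
      ring
    simp only [e2, smul_eq_mul, neg_neg, sub_add_cancel]
    have e3 : (t ^ 2) ^ a = t ^ (2 * a) := by
      rw [← rpow_natCast t 2, ← rpow_mul ht0.le]; norm_num
    rw [mul_rpow (by positivity) (le_max_right _ _), div_rpow (by positivity) hP.le,
      e3, rpow_sub ht0, rpow_neg hP.le, rpow_neg_one]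
    have h1 := rpow_pos_of_pos hP a
    have h2 := rpow_pos_of_pos ht0 (2 * a)
    generalize max ((P / t - β) ^ 2 - D) 0 ^ a = M
    field_simp
  rw [e1, integral_const_mul, intervalIntegral.integral_of_le hN, integral_Ioc_eq_integral_Ioo]
  congr 1
  have hsub : Ioo (√D) (P / δ - β) ⊆ Ioo (-β) (P / δ - β) := Ioo_subset_Ioo_left (by linarith)
  rw [setIntegral_eq_of_subset_of_forall_sdiff_eq_zero measurableSet_Ioo hsub]
  · refine setIntegral_congr_fun measurableSet_Ioo fun w hw => ?_
    have : D ≤ w ^ 2 := by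
      rw [← sq_sqrt hr0]
      have := sqrt_nonneg D
      have := hw.1
      gcongr
    simp only [max_eq_left (sub_nonneg.2 this)]
  · intro w hw
    have hw1 : w ≤ √D := by
      by_contra h
      exact hw.2 ⟨not_le.1 h, hw.1.2⟩
    have : w ^ 2 ≤ D := by
      rw [← sq_sqrt hr0]
      apply sq_le_sq'
      · linarith [hw.1.1]
      · exact hw1
    rw [max_eq_right (by linarith), zero_rpow ha.ne', zero_div]

theorem integral_sq_sub_rpow_mul {a β c N : ℝ} (ha : 0 < a) (hc : 0 < c)
    (hN : √(β ^ 2 + c) ≤ N) :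
    ∫ w in √(β ^ 2 + c)..N, ((w ^ 2 - (β ^ 2 + c)) ^ a / (w + β) +
        (w ^ 2 - (β ^ 2 + c)) ^ a / (w - β)) =
      (N ^ 2 - (β ^ 2 + c)) ^ a / a -
        ∫ k in (0 : ℝ)..(N ^ 2 - (β ^ 2 + c)), k ^ (a - 1) * (c / (k + c)) := by
  set D := β ^ 2 + c with hD
  have hD0 : 0 ≤ D := by positivity
  have hr : |β| < √D := by
    rw [← sqrt_sq_eq_abs]; exact sqrt_lt_sqrt (sq_nonneg _) (by linarith)
  have hr1 := (abs_lt.1 hr).1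
  have hr2 := (abs_lt.1 hr).2
  have hDN : 0 ≤ N ^ 2 - D := by
    have := sq_sqrt hD0
    have := pow_le_pow_left₀ (sqrt_nonneg D) hN 2
    linarith
  have hsub : ∫ w in √D..N, ((fun k : ℝ => k ^ a / (k + c)) ∘ fun w => w ^ 2 - D) w * (2 * w) =
      ∫ k in (√D ^ 2 - D)..(N ^ 2 - D), k ^ a / (k + c) := by
    apply intervalIntegral.integral_comp_mul_deriv''
    · fun_prop
    · intro w _
      have := ((hasDerivAt_pow 2 w).sub_const D)
      refine (this.congr_deriv ?_).hasDerivWithinAt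
      norm_num
    · fun_prop
    · have hpos : ∀ k ∈ (fun w : ℝ => w ^ 2 - D) '' uIcc (√D) N, 0 ≤ k := by
        rintro _ ⟨w, hw, rfl⟩
        rw [uIcc_of_le hN] at hw
        have := sq_sqrt hD0
        have := pow_le_pow_left₀ (sqrt_nonneg D) hw.1 2
        simp only
        linarith
      refine ContinuousOn.div ?_ (by fun_prop) fun k hk => by linarith [hpos k hk]
      exact fun k _ => (continuousAt_rpow_const _ _ (Or.inr ha.le)).continuousWithinAt
  rw [sq_sqrt hD0, sub_self] at hsub
  have e1 : ∫ w in √D..N, ((w ^ 2 - D) ^ a / (w + β) + (w ^ 2 - D) ^ a / (w - β)) =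
      ∫ k in (0 : ℝ)..(N ^ 2 - D), k ^ a / (k + c) := by
    rw [← hsub]
    refine intervalIntegral.integral_congr fun w hw => ?_
    rw [uIcc_of_le hN] at hw
    have h1 : w + β ≠ 0 := by linarith [hw.1]
    have h2 : w - β ≠ 0 := by linarith [hw.1]
    have h3 : w ^ 2 - D + c = (w + β) * (w - β) := by rw [hD]; ring
    simp only [Function.comp, h3]
    field_simp
    ring
  have hfi : IntervalIntegrable (fun k : ℝ => k ^ (a - 1)) volume 0 (N ^ 2 - D) :=
    intervalIntegral.intervalIntegrable_rpow' (by linarith)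
  have hfi2 : IntervalIntegrable (fun k : ℝ => k ^ (a - 1) * (c / (k + c))) volume 0
      (N ^ 2 - D) := by
    refine hfi.mul_continuousOn (ContinuousOn.div (by fun_prop) (by fun_prop) fun k hk => ?_)
    rw [uIcc_of_le hDN] at hk
    linarith [hk.1]
  have e2 : (N ^ 2 - D) ^ a / a = ∫ k in (0 : ℝ)..(N ^ 2 - D), k ^ (a - 1) := by
    rw [integral_rpow (Or.inl (by linarith))]
    simp [ha.ne']
  rw [e1, e2, ← intervalIntegral.integral_sub hfi hfi2]
  refine intervalIntegral.integral_congr_ae (Eventually.of_forall fun k hk => ?_)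
  rw [uIoc_of_le hDN] at hk
  have hk0 : 0 < k := hk.1
  rw [rpow_sub_one hk0.ne']
  field_simp
  ring

theorem sq_sub_rpow_div_mem_Icc {a β D N w v : ℝ} (ha : 0 < a) (hD : 0 ≤ D)
    (hN : 2 * |β| + √D + 1 ≤ N) (hw : |w - N| ≤ |β|) (hv : |v| ≤ |β|) :
    (w ^ 2 - D) ^ a / (w + v) ∈
      Icc (((N - |β|) ^ 2 - D) ^ a / (N + 2 * |β|)) (((N + |β|) ^ 2) ^ a / (N - 2 * |β|)) := by
  have hb := abs_nonneg β
  have hs := sqrt_nonneg D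
  obtain ⟨w1, w2⟩ := abs_le.1 hw
  obtain ⟨v1, v2⟩ := abs_le.1 hv
  have h1 : D ≤ (N - |β|) ^ 2 := by
    rw [← sq_sqrt hD]; gcongr; linarith
  have h2 : (N - |β|) ^ 2 ≤ w ^ 2 := by
    have : 0 ≤ N - |β| := by linarith
    have : N - |β| ≤ w := by linarith
    gcongr
  have h3 : w ^ 2 ≤ (N + |β|) ^ 2 := by
    have : 0 ≤ w := by linarith
    have : w ≤ N + |β| := by linarith
    gcongr
  constructor
  · exact div_le_div₀ (rpow_nonneg (by linarith) _)
      (rpow_le_rpow (by linarith) (by linarith) ha.le) (by linarith) (by linarith)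
  · exact div_le_div₀ (rpow_nonneg (by linarith) _)
      (rpow_le_rpow (by linarith) (by linarith) ha.le) (by linarith) (by linarith)

theorem tendsto_edge_integrals {a β D : ℝ} (ha : 0 < a) (ha1 : a < 1) (hD : 0 ≤ D) :
    Tendsto (fun N : ℝ => (∫ w in N..(N - β), (w ^ 2 - D) ^ a / (w + β)) +
      ∫ w in N..(N + β), (w ^ 2 - D) ^ a / (w - β)) atTop (nhds 0) := by
  set U : ℝ → ℝ := fun N => ((N + |β|) ^ 2) ^ a / (N - 2 * |β|) with hU
  set L : ℝ → ℝ := fun N => ((N - |β|) ^ 2 - D) ^ a / (N + 2 * |β|) with hL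
  have hUL : Tendsto (fun N => 2 * |β| * (U N - L N)) atTop (nhds 0) := by
    set ρ : ℝ → ℝ := fun h => ((1 + |β| * h) ^ 2) ^ a / (1 - 2 * |β| * h) -
      ((1 - |β| * h) ^ 2 - D * h ^ 2) ^ a / (1 + 2 * |β| * h) with hρ
    have hd : DifferentiableAt ℝ ρ 0 := by
      refine DifferentiableAt.sub (DifferentiableAt.div ?_ (by fun_prop) (by simp))
        (DifferentiableAt.div ?_ (by fun_prop) (by simp))
      · exact DifferentiableAt.rpow_const (by fun_prop) (Or.inl (by simp))
      · exact DifferentiableAt.rpow_const (by fun_prop) (Or.inl (by simp))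
    have h0 : ρ 0 = 0 := by simp [hρ]
    have := (tendsto_rpow_mul_comp_inv (b := 2 * a - 1) (by linarith) hd h0).const_mul (2 * |β|)
    rw [mul_zero] at this
    refine this.congr' ?_
    filter_upwards [eventually_ge_atTop (2 * |β| + √D + 1)] with N hN
    have hb := abs_nonneg β
    have hs := sqrt_nonneg D
    have hN0 : 0 < N := by linarith
    congr 1
    have e1 : (1 + |β| * N⁻¹) ^ 2 = (N + |β|) ^ 2 / N ^ 2 := by field_simp
    have e2 : (1 - |β| * N⁻¹) ^ 2 - D * N⁻¹ ^ 2 = ((N - |β|) ^ 2 - D) / N ^ 2 := by field_simp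
    have h1 : D ≤ (N - |β|) ^ 2 := by
      rw [← sq_sqrt hD]; gcongr; linarith
    have h2 : N - 2 * |β| ≠ 0 := by linarith
    have h3 : N + 2 * |β| ≠ 0 := by linarith
    have e3 : 1 - 2 * |β| * N⁻¹ = (N - 2 * |β|) / N := by field_simp
    have e4 : 1 + 2 * |β| * N⁻¹ = (N + 2 * |β|) / N := by field_simp
    simp only [hρ, hU, hL]
    rw [e1, e2, e3, e4, div_rpow (by positivity) (by positivity),
      div_rpow (by linarith) (by positivity), ← rpow_natCast N 2, ← rpow_mul hN0.le, rpow_sub hN0,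
      rpow_one]
    have := rpow_pos_of_pos hN0 (2 * a)
    push_cast
    field_simp
  refine squeeze_zero_norm' ?_ hUL
  filter_upwards [eventually_ge_atTop (2 * |β| + √D + 1)] with N hN
  have hb := abs_nonneg β
  have bound : ∀ v b : ℝ, |v| ≤ |β| → |b| ≤ |β| →
      ‖(∫ w in N..(N + b), (w ^ 2 - D) ^ a / (w + v)) - b * L N‖ ≤ (U N - L N) * |b| := by
    intro v b hv hb'
    have hmem : ∀ w ∈ uIcc N (N + b), |w - N| ≤ |β| := by
      intro w hw
      have := abs_sub_left_of_mem_uIcc hw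
      simp only [add_sub_cancel_left] at this
      exact this.trans hb'
    have hs := sqrt_nonneg D
    have hci : IntervalIntegrable (fun w : ℝ => (w ^ 2 - D) ^ a / (w + v)) volume N (N + b) := by
      refine ContinuousOn.intervalIntegrable (ContinuousOn.div ?_ (by fun_prop) fun w hw => ?_)
      · exact ContinuousOn.rpow_const (by fun_prop) fun w _ => Or.inr ha.le
      · have := (abs_le.1 (hmem w hw)).1
        have := (abs_le.1 hv).1
        linarith
    have e : b * L N = ∫ _ in N..(N + b), L N := by simp
    rw [e, ← intervalIntegral.integral_sub hci intervalIntegrable_const]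
    have := intervalIntegral.norm_integral_le_of_norm_le_const (a := N) (b := N + b)
      (C := U N - L N) (f := fun w => (w ^ 2 - D) ^ a / (w + v) - L N) ?_
    · simpa using this
    · intro w hw
      have := sq_sub_rpow_div_mem_Icc ha hD hN (hmem w (uIoc_subset_uIcc hw)) hv
      rw [norm_eq_abs, abs_of_nonneg (sub_nonneg.2 this.1)]
      linarith [this.2]
  have b1 := bound β (-β) le_rfl (by simp)
  have b2 := bound (-β) β (by simp) le_rfl
  rw [abs_neg, ← sub_eq_add_neg] at b1
  simp only [← sub_eq_add_neg] at b2
  have := norm_add_le_of_le b1 b2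
  calc _ = _ := by congr 1; ring
    _ ≤ _ := this
    _ = _ := by ring

/-- The second difference of `t ↦ (P - 2 β t - γ t²)₊ᵃ` at `0`, integrated against
`t ^ (-1 - 2 a)`, does not depend on `P` and `β`. -/
theorem integral_secondDiff_quadratic {a P γ β : ℝ} (ha : 0 < a) (ha1 : a < 1) (hP : 0 < P)
    (hγ : 0 < γ)
    (hfi : IntegrableOn (fun t : ℝ => (2 * P ^ a - (max (P - 2 * β * t - γ * t ^ 2) 0) ^ a -
      (max (P + 2 * β * t - γ * t ^ 2) 0) ^ a) * t ^ (-1 - 2 * a)) (Ioi 0)) :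
    ∫ t in Ioi (0 : ℝ), (2 * P ^ a - (max (P - 2 * β * t - γ * t ^ 2) 0) ^ a -
      (max (P + 2 * β * t - γ * t ^ 2) 0) ^ a) * t ^ (-1 - 2 * a) =
      γ ^ a * (Gamma a * Gamma (1 - a)) := by
  set F : ℝ → ℝ := fun t => (2 * P ^ a - (max (P - 2 * β * t - γ * t ^ 2) 0) ^ a -
      (max (P + 2 * β * t - γ * t ^ 2) 0) ^ a) * t ^ (-1 - 2 * a) with hF
  have hPγ : 0 < P * γ := mul_pos hP hγ
  set D := β ^ 2 + P * γ with hD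
  have hD0 : 0 ≤ D := by positivity
  -- the truncated integrals converge to the full integral
  have lim1 : Tendsto (fun N : ℝ => ∫ t in Ioi (P / N), F t) atTop
      (nhds (∫ t in Ioi (0 : ℝ), F t)) := by
    have hl : Tendsto (fun N : ℝ => P / N) atTop (nhds 0) := tendsto_const_nhds.div_atTop tendsto_id
    have := tendsto_integral_filter_of_dominated_convergence (μ := volume.restrict (Ioi (0 : ℝ)))
      (l := atTop) (F := fun N : ℝ => (Ioi (P / N)).indicator F) (f := F) (fun t => ‖F t‖)
      (Eventually.of_forall fun N => hfi.aestronglyMeasurable.indicator measurableSet_Ioi)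
      (Eventually.of_forall fun N => Eventually.of_forall fun t => norm_indicator_le_norm_self _ _)
      hfi.norm ?_
    · refine this.congr' ?_
      filter_upwards [eventually_gt_atTop 0] with N hN
      rw [setIntegral_indicator measurableSet_Ioi, Ioi_inter_Ioi,
        max_eq_right (div_pos hP hN).le]
    · filter_upwards [ae_restrict_mem measurableSet_Ioi] with t ht
      refine tendsto_const_nhds.congr' ?_
      filter_upwards [hl.eventually (gt_mem_nhds ht)] with N hN
      rw [indicator_of_mem (mem_Ioi.2 hN)]
  -- explicit form of the truncated integrals
  have hval : ∀ᶠ N : ℝ in atTop, P ^ (-a) * (((N ^ 2) ^ a / a - (N ^ 2 - D) ^ a / a) +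
      (∫ k in (0 : ℝ)..(N ^ 2 - D), k ^ (a - 1) * (P * γ / (k + P * γ))) -
      ((∫ w in N..(N - β), (w ^ 2 - D) ^ a / (w + β)) +
        ∫ w in N..(N + β), (w ^ 2 - D) ^ a / (w - β))) = ∫ t in Ioi (P / N), F t := by
    filter_upwards [eventually_ge_atTop (|β| + √D + 1)] with N hN
    have hb := abs_nonneg β
    have hs := sqrt_nonneg D
    have hN0 : 0 < N := by linarith
    have hδ : 0 < P / N := by positivity
    have hr : |β| < √D := by
      rw [← sqrt_sq_eq_abs]; exact sqrt_lt_sqrt (sq_nonneg _) (by linarith)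
    have hPN : P / (P / N) = N := by field_simp
    have i1 := setIntegral_Ioi_quadratic_rpow (β := β) ha hP hγ hδ
      (by rw [hPN]; linarith [le_abs_self β])
    have i2 := setIntegral_Ioi_quadratic_rpow (β := -β) ha hP hγ hδ
      (by rw [hPN, neg_sq]; linarith [neg_abs_le β])
    simp only [hPN, neg_sq, sub_neg_eq_add, ← hD, mul_neg, neg_mul, ← sub_eq_add_neg] at i1 i2
    have hmain := integral_sq_sub_rpow_mul (β := β) (N := N) ha hPγ
      (by rw [← hD]; linarith)
    rw [← hD] at hmain
    have hci : ∀ v x y : ℝ, |v| ≤ |β| → √D ≤ x → √D ≤ y →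
        IntervalIntegrable (fun w : ℝ => (w ^ 2 - D) ^ a / (w + v)) volume x y := by
      intro v x y hv hx hy
      refine ContinuousOn.intervalIntegrable (ContinuousOn.div ?_ (by fun_prop) fun w hw => ?_)
      · exact ContinuousOn.rpow_const (by fun_prop) fun w _ => Or.inr ha.le
      · have h1 : min x y ≤ w := hw.1
        have h2 : √D ≤ min x y := le_min hx hy
        have := (abs_le.1 hv).1
        linarith
    have hci1 := fun x y => hci β x y le_rfl
    have hci2 := fun x y => hci (-β) x y (by simp)
    simp only [← sub_eq_add_neg] at hci2
    have hbN : √D ≤ N := by linarith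
    have hbN1 : √D ≤ N - β := by linarith [le_abs_self β]
    have hbN2 : √D ≤ N + β := by linarith [neg_abs_le β]
    rw [intervalIntegral.integral_add (hci1 _ _ le_rfl hbN) (hci2 _ _ le_rfl hbN)] at hmain
    have j1 := intervalIntegral.integral_add_adjacent_intervals (hci1 _ _ le_rfl hbN)
      (hci1 _ _ hbN hbN1)
    have j2 := intervalIntegral.integral_add_adjacent_intervals (hci2 _ _ le_rfl hbN)
      (hci2 _ _ hbN hbN2)
    have hpow : IntegrableOn (fun t : ℝ => t ^ (-1 - 2 * a)) (Ioi (P / N)) :=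
      integrableOn_Ioi_rpow_of_lt (by linarith) hδ
    have hq : ∀ b : ℝ, IntegrableOn (fun t : ℝ => (max (P - 2 * b * t - γ * t ^ 2) 0) ^ a *
        t ^ (-1 - 2 * a)) (Ioi (P / N)) := by
      intro b
      refine Integrable.mono' (hpow.const_mul ((P + b ^ 2 / γ) ^ a)) ?_ ?_
      · refine Measurable.aestronglyMeasurable ?_
        fun_prop
      · filter_upwards [ae_restrict_mem measurableSet_Ioi] with t ht
        have ht0 : 0 < t := hδ.trans ht
        have hp : 0 ≤ t ^ (-1 - 2 * a) := rpow_nonneg ht0.le _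
        rw [norm_eq_abs, abs_of_nonneg (mul_nonneg (rpow_nonneg (le_max_right _ _) _) hp)]
        gcongr
        refine max_le ?_ (by positivity)
        have : P + b ^ 2 / γ - (P - 2 * b * t - γ * t ^ 2) = (b + γ * t) ^ 2 / γ := by
          field_simp; ring
        have : 0 ≤ (b + γ * t) ^ 2 / γ := by positivity
        linarith
    have hq2 := hq (-β)
    simp only [mul_neg, neg_mul, sub_neg_eq_add] at hq2
    have hsplit : ∫ t in Ioi (P / N), F t = 2 * P ^ a * (∫ t in Ioi (P / N), t ^ (-1 - 2 * a)) -
        (∫ t in Ioi (P / N), (max (P - 2 * β * t - γ * t ^ 2) 0) ^ a * t ^ (-1 - 2 * a)) -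
        ∫ t in Ioi (P / N), (max (P + 2 * β * t - γ * t ^ 2) 0) ^ a * t ^ (-1 - 2 * a) := by
      have h12 := integral_sub ((hpow.const_mul (2 * P ^ a)).sub (hq β)) hq2
      simp only [Pi.sub_apply] at h12
      rw [← integral_const_mul, ← integral_sub (hpow.const_mul _) (hq β), ← h12]
      refine integral_congr_ae (Eventually.of_forall fun t => ?_)
      simp only [hF]
      ring
    have hpv : 2 * P ^ a * (∫ t in Ioi (P / N), t ^ (-1 - 2 * a)) =
        P ^ (-a) * ((N ^ 2) ^ a / a) := by
      rw [integral_Ioi_rpow_of_lt (by linarith) hδ]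
      have e : -1 - 2 * a + 1 = -(2 * a) := by ring
      rw [e, rpow_neg hδ.le, div_rpow hP.le hN0.le, rpow_neg hP.le, ← rpow_natCast N 2,
        ← rpow_mul hN0.le, mul_comm 2 a, rpow_mul hP.le]
      have h1 := rpow_pos_of_pos hP a
      have h2 := rpow_pos_of_pos hN0 (a * 2)
      have h3 : (P ^ a) ^ (2 : ℝ) = P ^ a * P ^ a := by
        rw [← sq]; exact_mod_cast rpow_natCast (P ^ a) 2
      rw [h3]
      push_cast
      rw [mul_comm 2 a]
      field_simp
    rw [hsplit, i1, i2, hpv, ← j1, ← j2]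
    linear_combination P ^ (-a) * hmain
  have lim2 := (((((tendsto_rpow_mul_comp_inv (b := a) ha1 (ρ := fun h => (1 - (1 - D * h) ^ a) / a)
    (DifferentiableAt.div_const (DifferentiableAt.sub (by fun_prop)
      (DifferentiableAt.rpow_const (by fun_prop) (Or.inl (by simp)))) _) (by simp)).comp
    (tendsto_pow_atTop (α := ℝ) two_ne_zero)).add
    ((intervalIntegral_tendsto_integral_Ioi 0 (integrableOn_Ioi_rpow_mul_div_add ha ha1 hPγ)
      (tendsto_atTop_add_const_right _ (-D) (tendsto_pow_atTop (α := ℝ) two_ne_zero))))).sub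
    (tendsto_edge_integrals (β := β) ha ha1 hD0)).const_mul (P ^ (-a)))
  have lim3 := lim2.congr' (f₂ := fun N => ∫ t in Ioi (P / N), F t) (by
    filter_upwards [hval, eventually_gt_atTop (√D), eventually_gt_atTop 0] with N hN hND hN0
    rw [← hN]
    have : 0 ≤ N ^ 2 - D := by
      have h1 := sq_sqrt hD0
      have := pow_le_pow_left₀ (sqrt_nonneg D) hND.le 2
      linarith
    have e : 1 - D * (N ^ 2)⁻¹ = (N ^ 2 - D) / N ^ 2 := by field_simp
    simp only [Function.comp, ← sub_eq_add_neg, e]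
    rw [div_rpow this (by positivity)]
    have := rpow_pos_of_pos (pow_pos hN0 2) a
    congr 3
    field_simp)
  rw [tendsto_nhds_unique lim1 lim3, integral_Ioi_rpow_mul_div_add ha ha1 hPγ,
    mul_rpow hP.le hγ.le, rpow_neg hP.le]
  have := rpow_pos_of_pos hP a
  field_simp
  ring

section Polar

variable {E : Type*} [NormedAddCommGroup E] [NormedSpace ℝ E] [MeasurableSpace E] [BorelSpace E]
  [FiniteDimensional ℝ E] (μ : Measure E) [μ.IsAddHaarMeasure]

theorem integrable_polar {f : E → ℝ} (hf : Integrable f μ) :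
    Integrable (fun p : sphere (0 : E) 1 × Ioi (0 : ℝ) => f ((p.2 : ℝ) • (p.1 : E)))
      (μ.toSphere.prod (.volumeIoiPow (Module.finrank ℝ E - 1))) := by
  rw [← μ.measurePreserving_homeomorphUnitSphereProd.integrable_comp_emb
    (Homeomorph.measurableEmbedding _)]
  have h : Integrable (fun x : ({(0)}ᶜ : Set E) => f x) (μ.comap (↑)) :=
    (integrableOn_iff_comap_subtypeVal (measurableSet_singleton (0 : E)).compl).1 hf.integrableOn
  refine h.congr (Eventually.of_forall fun x => ?_)
  have : ‖(x : E)‖ ≠ 0 := norm_ne_zero_iff.2 x.2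
  simp [smul_smul, this]

theorem integral_volumeIoiPow (n : ℕ) (g : ℝ → ℝ) :
    ∫ t : Ioi (0 : ℝ), g t ∂(Measure.volumeIoiPow n) = ∫ t in Ioi (0 : ℝ), t ^ n * g t := by
  simp only [Measure.volumeIoiPow, ENNReal.ofReal]
  rw [integral_withDensity_eq_integral_smul,
    integral_subtype_comap measurableSet_Ioi fun a ↦ Real.toNNReal (a ^ n) • g a,
    setIntegral_congr_fun measurableSet_Ioi fun x hx ↦ ?_]
  · rw [NNReal.smul_def, Real.coe_toNNReal _ (pow_nonneg hx.out.le _), smul_eq_mul]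
  · exact (measurable_subtype_coe.pow_const _).real_toNNReal

theorem integrable_volumeIoiPow {n : ℕ} {g : ℝ → ℝ}
    (hg : Integrable (fun t : Ioi (0 : ℝ) => g t) (Measure.volumeIoiPow n)) :
    IntegrableOn (fun t => t ^ n * g t) (Ioi (0 : ℝ)) := by
  rw [Measure.volumeIoiPow, integrable_withDensity_iff_integrable_smul' (by fun_prop) (by simp)]
    at hg
  rw [integrableOn_iff_comap_subtypeVal measurableSet_Ioi]
  refine hg.congr (Eventually.of_forall ?_)
  rintro ⟨x, hx : 0 < x⟩
  simp (disch := positivity) [ENNReal.toReal_ofReal]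

/-- Integration in polar coordinates. -/
theorem integral_polar [Nontrivial E] {f : E → ℝ} (hf : Integrable f μ) :
    ∫ x, f x ∂μ = ∫ θ, (∫ t in Ioi (0 : ℝ), t ^ (Module.finrank ℝ E - 1) * f (t • (θ : E)))
      ∂μ.toSphere := by
  calc
    ∫ x, f x ∂μ = ∫ x : ({(0)}ᶜ : Set E), f x ∂(μ.comap (↑)) := by
      rw [integral_subtype_comap (measurableSet_singleton _).compl fun x ↦ f x,
        restrict_compl_singleton]
    _ = ∫ p : sphere (0 : E) 1 × Ioi (0 : ℝ), f ((p.2 : ℝ) • (p.1 : E))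
        ∂μ.toSphere.prod (.volumeIoiPow (Module.finrank ℝ E - 1)) := by
      rw [← μ.measurePreserving_homeomorphUnitSphereProd.integral_comp
        (Homeomorph.measurableEmbedding _)]
      refine integral_congr_ae (Eventually.of_forall fun x => ?_)
      have : ‖(x : E)‖ ≠ 0 := norm_ne_zero_iff.2 x.2
      simp [smul_smul, this]
    _ = _ := by
      rw [integral_prod _ (integrable_polar μ hf)]
      exact integral_congr_ae (Eventually.of_forall fun θ =>
        integral_volumeIoiPow _ fun t => f (t • (θ : E)))

theorem ae_integrableOn_ray {f : E → ℝ} (hf : Integrable f μ) :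
    ∀ᵐ θ : sphere (0 : E) 1 ∂μ.toSphere, IntegrableOn
      (fun t : ℝ => t ^ (Module.finrank ℝ E - 1) * f (t • (θ : E))) (Ioi 0) := by
  filter_upwards [(integrable_polar μ hf).prod_right_ae] with θ hθ
  exact integrable_volumeIoiPow (g := fun t => f (t • (θ : E))) hθ

end Polar

section Coordinates

variable {d : ℕ}

/-- The projection `y ↦ (ỹ, 0)`. -/
def tproj (d : ℕ) : Ed d →ₗ[ℝ] Ed d where
  toFun y := WithLp.toLp 2 fun i => if (i : ℕ) < d - 1 then y i else 0
  map_add' u v := by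
    ext i
    by_cases h : (i : ℕ) < d - 1 <;> simp [h]
  map_smul' c v := by
    ext i
    by_cases h : (i : ℕ) < d - 1 <;> simp [h]

theorem tproj_apply (y : Ed d) (i : Fin d) :
    tproj d y i = if (i : ℕ) < d - 1 then y i else 0 := rfl

theorem tnorm_eq_norm_tproj (y : Ed d) : tnorm d y = ‖tproj d y‖ := by
  rw [tnorm, EuclideanSpace.norm_eq]
  congr 1
  refine Finset.sum_congr rfl fun i _ => ?_
  rw [tproj_apply]
  split_ifs <;> simp

theorem inner_tproj_tproj (u v : Ed d) : ⟪tproj d u, tproj d v⟫ = ⟪tproj d u, v⟫ := by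
  simp only [PiLp.inner_apply]
  refine Finset.sum_congr rfl fun i _ => ?_
  rw [tproj_apply, tproj_apply]
  split_ifs <;> simp

theorem inner_eq_tproj_add (hd : 0 < d) (u v : Ed d) :
    ⟪u, v⟫ = ⟪tproj d u, v⟫ + lastCoord d u * lastCoord d v := by
  obtain ⟨n, rfl⟩ : ∃ n, d = n + 1 := ⟨d - 1, by omega⟩
  simp only [PiLp.inner_apply, Fin.sum_univ_castSucc, tproj_apply, lastCoord, hd, dif_pos]
  simp [Fin.last, mul_comm]

theorem norm_sq_eq_tnorm_add (hd : 0 < d) (u : Ed d) :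
    ‖u‖ ^ 2 = tnorm d u ^ 2 + lastCoord d u ^ 2 := by
  rw [tnorm_eq_norm_tproj, ← real_inner_self_eq_norm_sq, ← real_inner_self_eq_norm_sq,
    inner_eq_tproj_add hd, inner_tproj_tproj]
  ring

theorem tnorm_le_norm (u : Ed d) : tnorm d u ≤ ‖u‖ := by
  rw [tnorm, EuclideanSpace.norm_eq]
  refine sqrt_le_sqrt (Finset.sum_le_sum fun i _ => ?_)
  split_ifs
  · simp
  · positivity

theorem tnorm_nonneg (u : Ed d) : 0 ≤ tnorm d u := sqrt_nonneg _

theorem continuous_tnorm : Continuous (tnorm d) := by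
  have : tnorm d = fun y => ‖tproj d y‖ := funext tnorm_eq_norm_tproj
  rw [this]
  exact (LinearMap.continuous_of_finiteDimensional (tproj d)).norm

theorem tnorm_smul (t : ℝ) (u : Ed d) : tnorm d (t • u) = |t| * tnorm d u := by
  simp [tnorm_eq_norm_tproj, norm_smul]

theorem tnorm_add_sq (x z : Ed d) :
    tnorm d (x + z) ^ 2 = tnorm d x ^ 2 + 2 * ⟪tproj d x, z⟫ + tnorm d z ^ 2 := by
  simp only [tnorm_eq_norm_tproj, map_add]
  rw [norm_add_sq_real, inner_tproj_tproj]

theorem abs_inner_tproj_le (x z : Ed d) : |⟪tproj d x, z⟫| ≤ tnorm d x * tnorm d z := by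
  rw [← inner_tproj_tproj, tnorm_eq_norm_tproj, tnorm_eq_norm_tproj]
  exact abs_real_inner_le_norm _ _

theorem abs_tnorm_sub_le (x y : Ed d) : |tnorm d y - tnorm d x| ≤ ‖y - x‖ := by
  refine le_trans ?_ (tnorm_le_norm (y - x))
  rw [tnorm_eq_norm_tproj, tnorm_eq_norm_tproj, tnorm_eq_norm_tproj, map_sub]
  exact abs_norm_sub_norm_le _ _

/-- The reflection `(ỹ, y_d) ↦ (ỹ, -y_d)`. -/
noncomputable def reflLast (d : ℕ) : Ed d ≃ₗᵢ[ℝ] Ed d :=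
  LinearIsometryEquiv.piLpCongrRight 2 fun i : Fin d =>
    if (i : ℕ) < d - 1 then LinearIsometryEquiv.refl ℝ ℝ else LinearIsometryEquiv.neg ℝ

theorem reflLast_apply (y : Ed d) (i : Fin d) :
    reflLast d y i = if (i : ℕ) < d - 1 then y i else - y i := by
  simp only [reflLast, LinearIsometryEquiv.piLpCongrRight_apply]
  split_ifs <;> simp

theorem tproj_reflLast (y : Ed d) : tproj d (reflLast d y) = tproj d y := by
  ext i
  rw [tproj_apply, tproj_apply, reflLast_apply]
  split_ifs <;> rfl

theorem lastCoord_reflLast (y : Ed d) : lastCoord d (reflLast d y) = - lastCoord d y := by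
  unfold lastCoord
  split_ifs
  · rw [reflLast_apply, if_neg (by simp)]
  · simp

theorem abs_lastCoord_le (hd : 0 < d) (u : Ed d) : |lastCoord d u| ≤ ‖u‖ := by
  apply abs_le_of_sq_le_sq _ (norm_nonneg u)
  rw [norm_sq_eq_tnorm_add hd]
  nlinarith [sq_nonneg (tnorm d u)]

theorem continuous_lastCoord : Continuous (lastCoord d) := by
  unfold lastCoord
  split_ifs
  · fun_prop
  · exact continuous_const

end Coordinates

section SphereMoment

variable {d : ℕ}

theorem integral_Ioi_pow_mul_rpow_mul_exp {n : ℕ} {α : ℝ} (hα : 0 < α) :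
    ∫ t in Ioi (0 : ℝ), t ^ n * (t ^ α * rexp (-t ^ 2)) = 1 / 2 * Gamma ((n + α + 1) / 2) := by
  have hn : (0 : ℝ) ≤ n := n.cast_nonneg
  rw [← integral_rpow_mul_exp_neg_rpow two_pos (q := n + α) (by linarith)]
  refine setIntegral_congr_fun measurableSet_Ioi fun t (ht : 0 < t) => ?_
  rw [rpow_add ht, rpow_natCast, rpow_two, mul_assoc]

theorem integrable_rpow_norm_mul_exp {α : ℝ} (hd : 0 < d) (hα : 0 < α) :
    Integrable fun y : Ed d => ‖y‖ ^ α * rexp (-‖y‖ ^ 2) := by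
  have : Nonempty (Fin d) := ⟨⟨0, hd⟩⟩
  rw [integrable_fun_norm_addHaar volume (f := fun t : ℝ => t ^ α * rexp (-t ^ 2))]
  have := integrableOn_rpow_mul_exp_neg_rpow (p := 2) (s := (d - 1 : ℕ) + α)
    (by have : (0 : ℝ) ≤ (d - 1 : ℕ) := Nat.cast_nonneg _
        linarith) two_pos
  refine this.congr_fun (fun t (ht : 0 < t) => ?_) measurableSet_Ioi
  simp only [finrank_euclideanSpace, Fintype.card_fin, smul_eq_mul]
  rw [rpow_add ht, rpow_natCast, rpow_two, mul_assoc]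

theorem integrable_rpow_tnorm_mul_exp {α : ℝ} (hd : 0 < d) (hα : 0 < α) :
    Integrable fun y : Ed d => tnorm d y ^ α * rexp (-‖y‖ ^ 2) := by
  refine (integrable_rpow_norm_mul_exp hd hα).mono' ?_ (Eventually.of_forall fun y => ?_)
  · have := continuous_tnorm (d := d)
    exact (((this.rpow_const fun _ => Or.inr hα.le).mul (by fun_prop))).aestronglyMeasurable
  · have h0 := tnorm_nonneg y
    have h1 := tnorm_le_norm y
    rw [norm_eq_abs, abs_of_nonneg (by positivity)]
    gcongr

theorem integral_rpow_tnorm_mul_exp_eq_sphere {α : ℝ} (hd : 0 < d) (hα : 0 < α) :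
    ∫ y : Ed d, tnorm d y ^ α * rexp (-‖y‖ ^ 2) =
      (∫ θ : sphere (0 : Ed d) 1, tnorm d θ ^ α ∂(volume : Measure (Ed d)).toSphere) *
        (1 / 2 * Gamma ((d + α) / 2)) := by
  have : Nonempty (Fin d) := ⟨⟨0, hd⟩⟩
  rw [integral_polar volume (integrable_rpow_tnorm_mul_exp hd hα), ← integral_mul_const]
  refine integral_congr_ae (Eventually.of_forall fun θ => ?_)
  have hθ : ‖(θ : Ed d)‖ = 1 := by simp
  have e : ((d : ℝ) + α) / 2 = ((d - 1 : ℕ) + α + 1) / 2 := by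
    rw [Nat.cast_pred hd]; ring
  simp only
  rw [e, ← integral_Ioi_pow_mul_rpow_mul_exp hα, ← integral_const_mul]
  refine setIntegral_congr_fun measurableSet_Ioi fun t (ht : 0 < t) => ?_
  simp only [finrank_euclideanSpace, Fintype.card_fin]
  rw [tnorm_smul, norm_smul, hθ, norm_eq_abs, abs_of_pos ht, mul_rpow ht.le (tnorm_nonneg _),
    mul_one]
  ring

theorem integral_rpow_norm_mul_exp {n : ℕ} (hn : 0 < n) {α : ℝ} (hα : 0 < α) :
    ∫ y : Ed n, ‖y‖ ^ α * rexp (-‖y‖ ^ 2) =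
      √π ^ n * Gamma ((n + α) / 2) / Gamma (n / 2) := by
  have : Nonempty (Fin n) := ⟨⟨0, hn⟩⟩
  rw [integral_fun_norm_addHaar volume (fun t : ℝ => t ^ α * rexp (-t ^ 2))]
  simp only [finrank_euclideanSpace, Fintype.card_fin, smul_eq_mul, nsmul_eq_mul]
  rw [integral_Ioi_pow_mul_rpow_mul_exp hα, measureReal_def, EuclideanSpace.volume_ball]
  have hn' : (0 : ℝ) < n := Nat.cast_pos.2 hn
  have e : ((n - 1 : ℕ) + α + 1) / 2 = ((n : ℝ) + α) / 2 := by
    rw [Nat.cast_pred hn]; ring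
  have hG : 0 < Gamma ((n : ℝ) / 2) := Gamma_pos_of_pos (by positivity)
  rw [e, Fintype.card_fin, Gamma_add_one (by positivity)]
  simp only [ENNReal.ofReal_one, one_pow, one_mul]
  rw [ENNReal.toReal_ofReal (by positivity)]
  field_simp

theorem integral_rpow_tnorm_mul_exp {n : ℕ} {α : ℝ} :
    ∫ y : Ed (n + 1), tnorm (n + 1) y ^ α * rexp (-‖y‖ ^ 2) =
      √π * ∫ y : Ed n, ‖y‖ ^ α * rexp (-‖y‖ ^ 2) := by
  rw [← (PiLp.volume_preserving_toLp (Fin (n + 1))).integral_comp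
      (MeasurableEquiv.toLp 2 _).measurableEmbedding,
    ← (PiLp.volume_preserving_toLp (Fin n)).integral_comp
      (MeasurableEquiv.toLp 2 _).measurableEmbedding,
    ← (volume_preserving_piFinSuccAbove (fun _ : Fin (n + 1) => ℝ) (Fin.last n)).symm.integral_comp
      (MeasurableEquiv.measurableEmbedding _)]
  have hg : ∫ x : ℝ, rexp (-x ^ 2) = √π := by simpa using integral_gaussian 1
  rw [← hg, Measure.volume_eq_prod, ← integral_prod_mul]
  refine integral_congr_ae (Eventually.of_forall ?_)
  rintro ⟨x, v⟩
  have h1 : tnorm (n + 1) (WithLp.toLp 2 ((MeasurableEquiv.piFinSuccAbove (fun _ => ℝ)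
      (Fin.last n)).symm (x, v))) = ‖(WithLp.toLp 2 v : Ed n)‖ := by
    rw [tnorm, EuclideanSpace.norm_eq, Fin.sum_univ_castSucc]
    simp [MeasurableEquiv.piFinSuccAbove, Fin.insertNthEquiv]
  have h2 : ‖(WithLp.toLp 2 ((MeasurableEquiv.piFinSuccAbove (fun _ => ℝ)
      (Fin.last n)).symm (x, v)) : Ed (n + 1))‖ ^ 2 = x ^ 2 + ‖(WithLp.toLp 2 v : Ed n)‖ ^ 2 := by
    rw [EuclideanSpace.norm_sq_eq, EuclideanSpace.norm_sq_eq, Fin.sum_univ_castSucc]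
    simp [MeasurableEquiv.piFinSuccAbove, Fin.insertNthEquiv, add_comm]
  simp only [h1, h2]
  rw [neg_add, exp_add]
  ring

/-- The moments of `|θ̃|` over the unit sphere. -/
theorem integral_sphere_rpow_tnorm {α : ℝ} (hd : 2 ≤ d) (hα : 0 < α) :
    ∫ θ : sphere (0 : Ed d) 1, tnorm d θ ^ α ∂(volume : Measure (Ed d)).toSphere =
      2 * π ^ ((d : ℝ) / 2) * Gamma ((d - 1 + α) / 2) /
        (Gamma ((d - 1) / 2) * Gamma ((d + α) / 2)) := by
  have h := integral_rpow_tnorm_mul_exp_eq_sphere (d := d) (by omega) hα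
  obtain ⟨n, rfl⟩ : ∃ n, d = n + 1 := ⟨d - 1, by omega⟩
  have hn : 0 < n := by omega
  have hn' : (0 : ℝ) < n := Nat.cast_pos.2 hn
  rw [integral_rpow_tnorm_mul_exp, integral_rpow_norm_mul_exp hn hα] at h
  have e1 : ((n + 1 : ℕ) : ℝ) - 1 = n := by push_cast; ring
  have e2 : π ^ (((n + 1 : ℕ) : ℝ) / 2) = √π ^ n * √π := by
    rw [← pow_succ, ← rpow_natCast, sqrt_eq_rpow, ← rpow_mul pi_pos.le]
    congr 1; ring
  have hG : 0 < Gamma ((n : ℝ) / 2) := Gamma_pos_of_pos (by positivity)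
  have hG2 : 0 < Gamma ((((n + 1 : ℕ) : ℝ) + α) / 2) := Gamma_pos_of_pos (by positivity)
  rw [e1, e2, eq_div_iff (by positivity)]
  rw [eq_comm, ← mul_div_assoc, eq_div_iff hG.ne'] at h
  linear_combination 2 * h

end SphereMoment

section Kernel

variable {d : ℕ}

/-- A first-order Taylor estimate for real powers, uniform on compact subintervals of `(0, ∞)`. -/
theorem exists_rpow_taylor_bound (b : ℝ) {m M : ℝ} (hm : 0 < m) :
    ∃ K : ℝ, 0 ≤ K ∧ ∀ u ∈ Icc m M, ∀ v ∈ Icc m M,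
      |v ^ b - u ^ b - b * u ^ (b - 1) * (v - u)| ≤ K * (v - u) ^ 2 := by
  obtain ⟨B, hB⟩ : ∃ B, ∀ t ∈ Icc m M, ‖(b - 1) * t ^ (b - 1 - 1)‖ ≤ B := by
    refine isCompact_Icc.exists_bound_of_continuousOn (ContinuousOn.mul continuousOn_const
      (ContinuousOn.rpow_const continuousOn_id fun t ht => Or.inl ?_))
    have := hm.trans_le ht.1
    exact this.ne'
  have hB' : ∀ t ∈ Icc m M, ‖(b - 1) * t ^ (b - 1 - 1)‖ ≤ max B 0 :=
    fun t ht => (hB t ht).trans (le_max_left _ _)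
  have h1 : ∀ u ∈ Icc m M, ∀ v ∈ Icc m M,
      ‖v ^ (b - 1) - u ^ (b - 1)‖ ≤ max B 0 * ‖v - u‖ := fun u hu v hv =>
    (convex_Icc m M).norm_image_sub_le_of_norm_hasDerivWithin_le
      (fun t ht => (Real.hasDerivAt_rpow_const (Or.inl (hm.trans_le ht.1).ne')).hasDerivWithinAt)
      hB' hu hv
  refine ⟨|b| * max B 0, by positivity, fun u hu v hv => ?_⟩
  have hsub : segment ℝ u v ⊆ Icc m M := (convex_Icc m M).segment_subset hu hv
  have h2 := (convex_segment u v).norm_image_sub_le_of_norm_hasDerivWithin_le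
    (f := fun t => t ^ b - b * u ^ (b - 1) * t) (C := |b| * max B 0 * ‖v - u‖)
    (fun t ht => ((Real.hasDerivAt_rpow_const (Or.inl (hm.trans_le (hsub ht).1).ne')).sub
      ((hasDerivAt_id t).const_mul (b * u ^ (b - 1)))).hasDerivWithinAt)
    (fun t ht => by
      have e : b * t ^ (b - 1) - b * u ^ (b - 1) * 1 = b * (t ^ (b - 1) - u ^ (b - 1)) := by ring
      rw [e, norm_mul, norm_eq_abs b, mul_assoc]
      refine mul_le_mul_of_nonneg_left ((h1 u hu t (hsub ht)).trans ?_) (abs_nonneg _)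
      exact mul_le_mul_of_nonneg_left (norm_sub_le_of_mem_segment ht) (le_max_right _ _))
    (left_mem_segment ℝ u v) (right_mem_segment ℝ u v)
  calc |v ^ b - u ^ b - b * u ^ (b - 1) * (v - u)|
      = ‖v ^ b - b * u ^ (b - 1) * v - (u ^ b - b * u ^ (b - 1) * u)‖ := by
        rw [norm_eq_abs]; congr 1; ring
    _ ≤ |b| * max B 0 * ‖v - u‖ * ‖v - u‖ := h2
    _ = |b| * max B 0 * (v - u) ^ 2 := by rw [mul_assoc, norm_eq_abs, abs_mul_abs_self, sq]

theorem integrable_min_rpow_mul_kernel {α κ : ℝ} (hd : 0 < d) (hα : 0 < α) (hκ : α < κ) :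
    Integrable fun z : Ed d => min (‖z‖ ^ κ) 1 * ‖z‖ ^ (-(d : ℝ) - α) := by
  have : Nonempty (Fin d) := ⟨⟨0, hd⟩⟩
  rw [integrable_fun_norm_addHaar volume (f := fun t : ℝ => min (t ^ κ) 1 * t ^ (-(d : ℝ) - α))]
  simp only [finrank_euclideanSpace, Fintype.card_fin, smul_eq_mul]
  have e : ∀ t : ℝ, 0 < t → t ^ (d - 1) * t ^ (-(d : ℝ) - α) = t ^ (-1 - α) := by
    intro t ht
    rw [← rpow_natCast, Nat.cast_pred hd, ← rpow_add ht]
    congr 1; ring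
  rw [← Ioc_union_Ioi_eq_Ioi zero_le_one, integrableOn_union]
  constructor
  · have h : IntegrableOn (fun t : ℝ => t ^ (κ - α - 1)) (Ioc 0 1) :=
      (intervalIntegral.intervalIntegrable_rpow' (by linarith)).1
    refine h.congr_fun (fun t ht => ?_) measurableSet_Ioc
    simp only
    rw [min_eq_left (rpow_le_one ht.1.le ht.2 (by linarith)), mul_left_comm, e t ht.1,
      ← rpow_add ht.1]
    congr 1; ring
  · have h : IntegrableOn (fun t : ℝ => t ^ (-1 - α)) (Ioi 1) :=
      integrableOn_Ioi_rpow_of_lt (by linarith) one_pos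
    refine h.congr_fun (fun t (ht : 1 < t) => ?_) measurableSet_Ioi
    simp only
    rw [min_eq_right (one_le_rpow ht.le (by linarith)), one_mul, e t (by linarith)]

theorem measurable_kernel {α : ℝ} : Measurable fun z : Ed d => ‖z‖ ^ (-(d : ℝ) - α) := by
  fun_prop

theorem measurableSet_norm_gt (δ : ℝ) : MeasurableSet {z : Ed d | δ < ‖z‖} :=
  measurableSet_lt measurable_const measurable_norm

theorem integrableOn_kernel {α δ : ℝ} (hd : 0 < d) (hα : 0 < α) (hδ : 0 < δ) :
    IntegrableOn (fun z : Ed d => ‖z‖ ^ (-(d : ℝ) - α)) {z | δ < ‖z‖} := by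
  have hm : 0 < min (δ ^ (α + 1)) 1 := lt_min (by positivity) one_pos
  refine Integrable.mono' (((integrable_min_rpow_mul_kernel hd hα (κ := α + 1)
    (by linarith)).integrableOn).const_mul (min (δ ^ (α + 1)) 1)⁻¹)
    measurable_kernel.aestronglyMeasurable ?_
  filter_upwards [ae_restrict_mem (measurableSet_norm_gt δ)] with z hz
  have hz' : δ < ‖z‖ := hz
  have hk : 0 ≤ ‖z‖ ^ (-(d : ℝ) - α) := by positivity
  rw [norm_eq_abs, abs_of_nonneg hk, inv_mul_eq_div, le_div_iff₀ hm, mul_comm]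
  gcongr

theorem integrableOn_mul_kernel {α δ B : ℝ} (hd : 0 < d) (hα : 0 < α) (hδ : 0 < δ)
    {f : Ed d → ℝ} (hf : Measurable f) (hB : ∀ z, |f z| ≤ B) :
    IntegrableOn (fun z : Ed d => f z * ‖z‖ ^ (-(d : ℝ) - α)) {z | δ < ‖z‖} :=
  (integrableOn_kernel hd hα hδ).bdd_mul hf.aestronglyMeasurable
    (Eventually.of_forall fun z => hB z)

theorem tendsto_setIntegral_norm_gt (hd : 0 < d) {G : Ed d → ℝ} (hG : Integrable G) :
    Tendsto (fun δ : ℝ => ∫ z in {z : Ed d | δ < ‖z‖}, G z) (nhdsWithin 0 (Ioi 0))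
      (nhds (∫ z, G z)) := by
  have : Nonempty (Fin d) := ⟨⟨0, hd⟩⟩
  have h := tendsto_integral_filter_of_dominated_convergence (μ := (volume : Measure (Ed d)))
    (l := nhdsWithin 0 (Ioi 0)) (F := fun δ : ℝ => {z : Ed d | δ < ‖z‖}.indicator G) (f := G)
    (fun z => ‖G z‖)
    (Eventually.of_forall fun δ => hG.aestronglyMeasurable.indicator (measurableSet_norm_gt δ))
    (Eventually.of_forall fun δ => Eventually.of_forall fun z => norm_indicator_le_norm_self _ _)
    hG.norm ?_
  · refine h.congr fun δ => ?_
    rw [integral_indicator (measurableSet_norm_gt δ)]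
  · have h0 : ∀ᵐ z : Ed d, z ≠ 0 := by
      rw [ae_iff]; simp
    filter_upwards [h0] with z hz
    refine tendsto_const_nhds.congr' ?_
    have : ∀ᶠ δ in nhdsWithin (0 : ℝ) (Ioi 0), δ < ‖z‖ :=
      (gt_mem_nhds (norm_pos_iff.2 hz)).filter_mono nhdsWithin_le_nhds
    filter_upwards [this] with δ hδ
    rw [indicator_of_mem (show z ∈ {z : Ed d | δ < ‖z‖} from hδ)]

theorem setIntegral_norm_sub_gt (x : Ed d) (δ : ℝ) (f : Ed d → ℝ) :
    ∫ y in {y : Ed d | δ < ‖y - x‖}, f y = ∫ z in {z : Ed d | δ < ‖z‖}, f (x + z) := by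
  have hm : MeasurableSet {y : Ed d | δ < ‖y - x‖} :=
    measurableSet_lt measurable_const (by fun_prop)
  rw [← integral_indicator hm, ← integral_indicator (measurableSet_norm_gt δ),
    ← integral_add_left_eq_self _ x]
  refine integral_congr_ae (Eventually.of_forall fun z => ?_)
  simp [indicator]

theorem setIntegral_norm_gt_comp_isometry (T : Ed d ≃ₗᵢ[ℝ] Ed d) (δ : ℝ) (f : Ed d → ℝ) :
    ∫ z in {z : Ed d | δ < ‖z‖}, f (T z) = ∫ z in {z : Ed d | δ < ‖z‖}, f z := by
  rw [← T.measurePreserving.setIntegral_preimage_emb T.toHomeomorph.measurableEmbedding f]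
  congr 3
  ext z
  simp

end Kernel

section SecondDifference

variable {d : ℕ}

theorem sExit_eq_of_tnorm_lt {α ε : ℝ} {x : Ed d} (hx : tnorm d x < ε) :
    sExit d α ε x = Cexit d α * (ε ^ 2 - tnorm d x ^ 2) ^ (α / 2) := by
  have := pow_le_pow_left₀ (tnorm_nonneg x) hx.le 2
  rw [sExit, max_eq_left (by linarith)]

theorem sExit_add {α ε : ℝ} (x z : Ed d) :
    sExit d α ε (x + z) = Cexit d α *
      (max (ε ^ 2 - tnorm d x ^ 2 - 2 * ⟪tproj d x, z⟫ - tnorm d z ^ 2) 0) ^ (α / 2) := by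
  rw [sExit, tnorm_add_sq]
  congr 3; ring

theorem Cexit_pos {α : ℝ} (hd : 2 ≤ d) (hα : 0 < α) : 0 < Cexit d α := by
  have hd' : (2 : ℝ) ≤ d := by exact_mod_cast hd
  have h1 : 0 < Gamma (((d : ℝ) - 1) / 2) := Gamma_pos_of_pos (by linarith)
  have h2 : 0 < Gamma (((d : ℝ) - 1 + α) / 2) := Gamma_pos_of_pos (by linarith)
  have h3 : 0 < Gamma (1 + α / 2) := Gamma_pos_of_pos (by linarith)
  unfold Cexit
  positivity

theorem sExit_nonneg {α ε : ℝ} (hd : 2 ≤ d) (hα : 0 < α) (y : Ed d) : 0 ≤ sExit d α ε y :=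
  mul_nonneg (Cexit_pos hd hα).le (rpow_nonneg (le_max_right _ _) _)

theorem sExit_le {α ε : ℝ} (hd : 2 ≤ d) (hα : 0 < α) (hε : 0 ≤ ε) (y : Ed d) :
    sExit d α ε y ≤ Cexit d α * ε ^ α := by
  have e : ε ^ α = (ε ^ 2) ^ (α / 2) := by
    rw [← rpow_natCast, ← rpow_mul hε]; congr 1; push_cast; ring
  rw [sExit, e]
  have := Cexit_pos hd hα
  gcongr
  exact max_le (by linarith [sq_nonneg (tnorm d y)]) (sq_nonneg _)

theorem abs_sExit_le {α ε : ℝ} (hd : 2 ≤ d) (hα : 0 < α) (hε : 0 ≤ ε) (y : Ed d) :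
    |sExit d α ε y| ≤ Cexit d α * ε ^ α := by
  rw [abs_of_nonneg (sExit_nonneg hd hα y)]
  exact sExit_le hd hα hε y

theorem measurable_sExit {α ε : ℝ} : Measurable (sExit d α ε) := by
  have := (continuous_tnorm (d := d)).measurable
  unfold sExit
  fun_prop

/-- The second difference of `s_ε` at `x`. -/
noncomputable def sExitDiff (d : ℕ) (α ε : ℝ) (x z : Ed d) : ℝ :=
  sExit d α ε (x + z) + sExit d α ε (x - z) - 2 * sExit d α ε x

theorem measurable_sExitDiff {α ε : ℝ} (x : Ed d) : Measurable (sExitDiff d α ε x) := by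
  have := measurable_sExit (d := d) (α := α) (ε := ε)
  unfold sExitDiff
  fun_prop

theorem abs_sExitDiff_le {α ε : ℝ} (hd : 2 ≤ d) (hα : 0 < α) (hε : 0 ≤ ε) (x z : Ed d) :
    |sExitDiff d α ε x z| ≤ 4 * (Cexit d α * ε ^ α) := by
  have h1 := abs_le.1 (abs_sExit_le hd hα hε (x + z))
  have h2 := abs_le.1 (abs_sExit_le hd hα hε (x - z))
  have h3 := abs_le.1 (abs_sExit_le hd hα hε x)
  rw [sExitDiff, abs_le]
  constructor <;> linarith [h1.1, h1.2, h2.1, h2.2, h3.1, h3.2]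

theorem exists_abs_sExitDiff_le_min {α ε : ℝ} (hd : 2 ≤ d) (hα : 0 < α) {x : Ed d}
    (hx : tnorm d x < ε) :
    ∃ K : ℝ, 0 ≤ K ∧ ∀ z, |sExitDiff d α ε x z| ≤ K * min (‖z‖ ^ (2 : ℝ)) 1 := by
  have hε : 0 < ε := (tnorm_nonneg x).trans_lt hx
  set P := ε ^ 2 - tnorm d x ^ 2 with hPdef
  have hP : 0 < P := by
    have := pow_lt_pow_left₀ hx (tnorm_nonneg x) two_ne_zero
    linarith
  have hC := Cexit_pos hd hα
  obtain ⟨K, hK, hT⟩ := exists_rpow_taylor_bound (α / 2) (m := P / 2) (M := 3 / 2 * P) (by linarith)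
  set B := 4 * (Cexit d α * ε ^ α) with hB
  have hB0 : 0 ≤ B := by positivity
  set ρ := min 1 (P / (4 * ε + 2)) with hρ
  have hρ0 : 0 < ρ := lt_min one_pos (by positivity)
  have hρ1 : ρ ≤ 1 := min_le_left _ _
  set D := Cexit d α * (2 * K * (2 * ε + 1) ^ 2 + |α / 2 * P ^ (α / 2 - 1)| * 2) with hD
  have hD0 : 0 ≤ D := by positivity
  refine ⟨D + B / ρ ^ 2, by positivity, fun z => ?_⟩
  rw [rpow_two]
  by_cases hz : ‖z‖ ≤ ρ
  · have hz1 : ‖z‖ ≤ 1 := hz.trans hρ1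
    rw [min_eq_left (by nlinarith [norm_nonneg z])]
    have ht := tnorm_le_norm z
    have ht0 := tnorm_nonneg z
    have hzP : (2 * ε + 1) * ‖z‖ ≤ P / 2 := by
      have : ‖z‖ ≤ P / (4 * ε + 2) := hz.trans (min_le_right _ _)
      rw [le_div_iff₀ (by positivity)] at this
      linarith
    have hin : |⟪tproj d x, z⟫| ≤ ε * ‖z‖ :=
      (abs_inner_tproj_le x z).trans (mul_le_mul hx.le ht ht0 hε.le)
    set β := ⟪tproj d x, z⟫ with hβ
    set τ := tnorm d z with hτ
    have hττ : τ ^ 2 ≤ ‖z‖ ^ 2 := by gcongr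
    have hττ' : τ ^ 2 ≤ ‖z‖ := by nlinarith [norm_nonneg z]
    have hin' := abs_le.1 hin
    have hτ2 := sq_nonneg τ
    have key : ∀ η : ℝ, |η| ≤ (2 * ε + 1) * ‖z‖ →
        |(max (P + η) 0) ^ (α / 2) - P ^ (α / 2) - α / 2 * P ^ (α / 2 - 1) * η| ≤
          K * ((2 * ε + 1) * ‖z‖) ^ 2 := by
      intro η hη
      have hη' := abs_le.1 (hη.trans hzP)
      have h := hT P ⟨by linarith, by linarith⟩ (P + η) ⟨by linarith [hη'.1], by linarith [hη'.2]⟩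
      rw [add_sub_cancel_left] at h
      rw [max_eq_left (by linarith [hη'.1])]
      refine h.trans (mul_le_mul_of_nonneg_left ?_ hK)
      exact sq_le_sq' (by linarith [(abs_le.1 hη).1]) (abs_le.1 hη).2
    have hlin : (2 * ε + 1) * ‖z‖ = 2 * (ε * ‖z‖) + ‖z‖ := by ring
    have k1 := abs_le.1 (key (-2 * β - τ ^ 2) (by
      rw [hlin, abs_le]; constructor <;> linarith [hin'.1, hin'.2]))
    have k2 := abs_le.1 (key (2 * β - τ ^ 2) (by
      rw [hlin, abs_le]; constructor <;> linarith [hin'.1, hin'.2]))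
    have e1 : sExit d α ε (x + z) = Cexit d α * (max (P + (-2 * β - τ ^ 2)) 0) ^ (α / 2) := by
      rw [sExit_add]; congr 3; ring
    have e2 : sExit d α ε (x - z) = Cexit d α * (max (P + (2 * β - τ ^ 2)) 0) ^ (α / 2) := by
      rw [sub_eq_add_neg, sExit_add, inner_neg_right, show tnorm d (-z) = τ by
        rw [hτ, tnorm_eq_norm_tproj, map_neg, norm_neg, tnorm_eq_norm_tproj]]
      congr 3; ring
    have e3 : sExit d α ε x = Cexit d α * P ^ (α / 2) := sExit_eq_of_tnorm_lt hx
    rw [sExitDiff, e1, e2, e3]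
    set X := (max (P + (-2 * β - τ ^ 2)) 0) ^ (α / 2)
    set Y := (max (P + (2 * β - τ ^ 2)) 0) ^ (α / 2)
    set Z := P ^ (α / 2)
    set c := α / 2 * P ^ (α / 2 - 1)
    have hc : |c * τ ^ 2| ≤ |c| * ‖z‖ ^ 2 := by
      rw [abs_mul, abs_of_nonneg hτ2]; gcongr
    have hc' := abs_le.1 hc
    have hXYZ : |X + Y - 2 * Z| ≤ (2 * K * (2 * ε + 1) ^ 2 + |c| * 2) * ‖z‖ ^ 2 := by
      have hs : X + Y - 2 * Z = (X - Z - c * (-2 * β - τ ^ 2)) + (Y - Z - c * (2 * β - τ ^ 2)) -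
          2 * (c * τ ^ 2) := by ring
      have hr : (2 * K * (2 * ε + 1) ^ 2 + |c| * 2) * ‖z‖ ^ 2 =
          2 * (K * ((2 * ε + 1) * ‖z‖) ^ 2) + 2 * (|c| * ‖z‖ ^ 2) := by ring
      rw [hs, hr, abs_le]
      constructor <;> linarith [k1.1, k1.2, k2.1, k2.2, hc'.1, hc'.2]
    have : Cexit d α * X + Cexit d α * Y - 2 * (Cexit d α * Z) = Cexit d α * (X + Y - 2 * Z) := by
      ring
    rw [this, abs_mul, abs_of_pos hC]
    calc Cexit d α * |X + Y - 2 * Z|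
        ≤ Cexit d α * ((2 * K * (2 * ε + 1) ^ 2 + |c| * 2) * ‖z‖ ^ 2) := by gcongr
      _ = D * ‖z‖ ^ 2 := by rw [hD]; ring
      _ ≤ (D + B / ρ ^ 2) * ‖z‖ ^ 2 := by
        gcongr
        exact le_add_of_nonneg_right (by positivity)
  · have hz' : ρ < ‖z‖ := not_le.1 hz
    have hm : ρ ^ 2 ≤ min (‖z‖ ^ 2) 1 := le_min (by gcongr) (by nlinarith)
    calc |sExitDiff d α ε x z| ≤ B := abs_sExitDiff_le hd hα hε.le x z
      _ = B / ρ ^ 2 * ρ ^ 2 := by field_simp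
      _ ≤ B / ρ ^ 2 * min (‖z‖ ^ 2) 1 := by gcongr
      _ ≤ (D + B / ρ ^ 2) * min (‖z‖ ^ 2) 1 := by
        gcongr
        exact le_add_of_nonneg_left hD0

theorem integrable_sExitDiff_mul_kernel {α ε : ℝ} (hd : 2 ≤ d) (hα : 0 < α) (hα2 : α < 2)
    {x : Ed d} (hx : tnorm d x < ε) :
    Integrable fun z => sExitDiff d α ε x z * ‖z‖ ^ (-(d : ℝ) - α) := by
  obtain ⟨K, hK, h⟩ := exists_abs_sExitDiff_le_min hd hα hx
  refine ((integrable_min_rpow_mul_kernel (by omega) hα hα2).const_mul K).mono'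
    ((measurable_sExitDiff x).mul measurable_kernel).aestronglyMeasurable
    (Eventually.of_forall fun z => ?_)
  have hk : 0 ≤ ‖z‖ ^ (-(d : ℝ) - α) := by positivity
  rw [norm_mul, norm_eq_abs, norm_eq_abs, abs_of_nonneg hk, ← mul_assoc]
  exact mul_le_mul_of_nonneg_right (h z) hk

theorem integral_sExitDiff_mul_kernel {α ε : ℝ} (hd : 2 ≤ d) (hα : 0 < α) (hα2 : α < 2)
    {x : Ed d} (hx : tnorm d x < ε) :
    ∫ z, sExitDiff d α ε x z * ‖z‖ ^ (-(d : ℝ) - α) =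
      -(Cexit d α * (Gamma (α / 2) * Gamma (1 - α / 2))) *
        ∫ θ : sphere (0 : Ed d) 1, tnorm d θ ^ α ∂(volume : Measure (Ed d)).toSphere := by
  have hd0 : 0 < d := by omega
  have : Nonempty (Fin d) := ⟨⟨0, hd0⟩⟩
  have hfi := integrable_sExitDiff_mul_kernel hd hα hα2 hx
  have hC := Cexit_pos hd hα
  rw [integral_polar volume hfi, ← integral_const_mul]
  refine integral_congr_ae ?_
  filter_upwards [ae_integrableOn_ray volume hfi] with θ hθi
  have hθ : ‖(θ : Ed d)‖ = 1 := by simp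
  set P := ε ^ 2 - tnorm d x ^ 2 with hPdef
  have hP : 0 < P := by
    have := pow_lt_pow_left₀ hx (tnorm_nonneg x) two_ne_zero
    linarith
  set β := ⟪tproj d x, (θ : Ed d)⟫ with hβ
  set γ := tnorm d (θ : Ed d) ^ 2 with hγ
  have hslice : ∀ t ∈ Ioi (0 : ℝ), t ^ (Module.finrank ℝ (Ed d) - 1) *
      (sExitDiff d α ε x (t • (θ : Ed d)) * ‖t • (θ : Ed d)‖ ^ (-(d : ℝ) - α)) =
      -Cexit d α * ((2 * P ^ (α / 2) - (max (P - 2 * β * t - γ * t ^ 2) 0) ^ (α / 2) -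
      (max (P + 2 * β * t - γ * t ^ 2) 0) ^ (α / 2)) * t ^ (-1 - 2 * (α / 2))) := by
    intro t (ht : 0 < t)
    have e1 : sExit d α ε (x + t • (θ : Ed d)) =
        Cexit d α * (max (P - 2 * β * t - γ * t ^ 2) 0) ^ (α / 2) := by
      rw [sExit_add, inner_smul_right, tnorm_smul, mul_pow, sq_abs]; congr 3; ring
    have e2 : sExit d α ε (x - t • (θ : Ed d)) =
        Cexit d α * (max (P + 2 * β * t - γ * t ^ 2) 0) ^ (α / 2) := by
      rw [sub_eq_add_neg, ← neg_smul, sExit_add, inner_smul_right, tnorm_smul, mul_pow, sq_abs]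
      congr 3; ring
    have e3 : sExit d α ε x = Cexit d α * P ^ (α / 2) := sExit_eq_of_tnorm_lt hx
    have e4 : t ^ (d - 1) * t ^ (-(d : ℝ) - α) = t ^ (-1 - 2 * (α / 2)) := by
      rw [← rpow_natCast, Nat.cast_pred hd0, ← rpow_add ht]
      congr 1; ring
    rw [sExitDiff, e1, e2, e3, finrank_euclideanSpace, Fintype.card_fin, norm_smul, hθ,
      norm_eq_abs, abs_of_pos ht, mul_one, ← e4]
    ring
  rw [setIntegral_congr_fun measurableSet_Ioi hslice, integral_const_mul]
  have hθi' := (integrableOn_congr_fun hslice measurableSet_Ioi).1 hθi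
  rcases (tnorm_nonneg (θ : Ed d)).eq_or_lt with h0 | h0
  · have hβ0 : β = 0 := by
      have := abs_inner_tproj_le x (θ : Ed d)
      rw [← h0, mul_zero] at this
      exact abs_nonpos_iff.1 this
    have hγ0 : γ = 0 := by rw [hγ, ← h0]; ring
    rw [← h0, zero_rpow hα.ne', hβ0, hγ0]
    have : ∀ t : ℝ, (2 * P ^ (α / 2) - (max (P - 2 * 0 * t - 0 * t ^ 2) 0) ^ (α / 2) -
      (max (P + 2 * 0 * t - 0 * t ^ 2) 0) ^ (α / 2)) * t ^ (-1 - 2 * (α / 2)) = 0 := by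
      intro t
      simp only [mul_zero, zero_mul, sub_zero, add_zero, max_eq_left hP.le]
      ring
    simp only [this]
    simp
  · have hγ0 : 0 < γ := by positivity
    have hi := (integrable_const_mul_iff (isUnit_iff_ne_zero.2 (neg_ne_zero.2 hC.ne')) _).1 hθi'
    rw [integral_secondDiff_quadratic (by linarith) (by linarith) hP hγ0 hi]
    have : γ ^ (α / 2) = tnorm d (θ : Ed d) ^ α := by
      rw [hγ, ← rpow_natCast, ← rpow_mul h0.le]; congr 1; push_cast; ring
    rw [this]; ring

theorem fracConst_mul_integral_sExitDiff {α ε : ℝ} (hd : 2 ≤ d) (hα : 0 < α) (hα2 : α < 2)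
    {x : Ed d} (hx : tnorm d x < ε) :
    fracConst d α * (1 / 2 * ∫ z, sExitDiff d α ε x z * ‖z‖ ^ (-(d : ℝ) - α)) = -1 := by
  have hd' : (2 : ℝ) ≤ d := by exact_mod_cast hd
  rw [integral_sExitDiff_mul_kernel hd hα hα2 hx, integral_sphere_rpow_tnorm hd hα, fracConst,
    Cexit]
  have h1 : 0 < Gamma (((d : ℝ) - 1) / 2) := Gamma_pos_of_pos (by linarith)
  have h2 : 0 < Gamma (((d : ℝ) - 1 + α) / 2) := Gamma_pos_of_pos (by linarith)
  have h4 : 0 < Gamma (((d : ℝ) + α) / 2) := Gamma_pos_of_pos (by linarith)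
  have h5 : 0 < Gamma (1 - α / 2) := Gamma_pos_of_pos (by linarith)
  have h6 : 0 < Gamma (α / 2) := Gamma_pos_of_pos (by linarith)
  have h7 : (2 : ℝ) ^ (α - 1) = 2 ^ α / 2 := by rw [rpow_sub two_pos, rpow_one]
  have h8 : π ^ (-(d : ℝ) / 2) = (π ^ ((d : ℝ) / 2))⁻¹ := by
    rw [← rpow_neg pi_pos.le]; congr 1; ring
  have h9 : (0 : ℝ) < π ^ ((d : ℝ) / 2) := by positivity
  have h10 : (0 : ℝ) < 2 ^ α := by positivity
  rw [add_comm 1 (α / 2), Gamma_add_one (by positivity), h7, h8]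
  generalize Gamma (1 - α / 2) = G at h5 ⊢
  field_simp

theorem setIntegral_sExit_sub {α ε δ : ℝ} (hd : 2 ≤ d) (hα : 0 < α) (hε : 0 < ε) (hδ : 0 < δ)
    (x : Ed d) :
    ∫ z in {z : Ed d | δ < ‖z‖}, (sExit d α ε (x + z) - sExit d α ε x) * ‖z‖ ^ (-(d : ℝ) - α) =
      1 / 2 * ∫ z in {z : Ed d | δ < ‖z‖}, sExitDiff d α ε x z * ‖z‖ ^ (-(d : ℝ) - α) := by
  have hd0 : 0 < d := by omega
  have hm := measurable_sExit (d := d) (α := α) (ε := ε)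
  have hb : ∀ u v : Ed d, |sExit d α ε u - sExit d α ε v| ≤ 2 * (Cexit d α * ε ^ α) := by
    intro u v
    have h1 := abs_sExit_le (ε := ε) hd hα hε.le u
    have h2 := abs_sExit_le (ε := ε) hd hα hε.le v
    exact (abs_sub _ _).trans (by linarith)
  have i1 := integrableOn_mul_kernel hd0 hα hδ
    (f := fun z => sExit d α ε (x + z) - sExit d α ε x) (by fun_prop) (fun z => hb _ _)
  have i2 := integrableOn_mul_kernel hd0 hα hδ
    (f := fun z => sExit d α ε (x - z) - sExit d α ε x) (by fun_prop) (fun z => hb _ _)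
  have hsym := setIntegral_norm_gt_comp_isometry (LinearIsometryEquiv.neg ℝ (E := Ed d)) δ
    (fun z => (sExit d α ε (x + z) - sExit d α ε x) * ‖z‖ ^ (-(d : ℝ) - α))
  simp only [LinearIsometryEquiv.coe_neg, norm_neg, ← sub_eq_add_neg] at hsym
  have hadd := integral_add i1 i2
  rw [hsym] at hadd
  have : ∫ z in {z : Ed d | δ < ‖z‖}, sExitDiff d α ε x z * ‖z‖ ^ (-(d : ℝ) - α) =
      ∫ z in {z : Ed d | δ < ‖z‖}, ((sExit d α ε (x + z) - sExit d α ε x) *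
        ‖z‖ ^ (-(d : ℝ) - α) + (sExit d α ε (x - z) - sExit d α ε x) * ‖z‖ ^ (-(d : ℝ) - α)) := by
    refine integral_congr_ae (Eventually.of_forall fun z => ?_)
    simp only [sExitDiff]
    ring
  rw [this, hadd]
  ring

/-- The fractional Laplacian of `s_ε` equals `-1` in the cylinder. -/
theorem tendsto_fracConst_mul_setIntegral_sExit {α ε : ℝ} (hd : 2 ≤ d) (hα : 0 < α) (hα2 : α < 2)
    {x : Ed d} (hx : tnorm d x < ε) :
    Tendsto (fun δ : ℝ => fracConst d α * ∫ z in {z : Ed d | δ < ‖z‖},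
      (sExit d α ε (x + z) - sExit d α ε x) * ‖z‖ ^ (-(d : ℝ) - α))
      (nhdsWithin 0 (Ioi 0)) (nhds (-1)) := by
  have h := ((tendsto_setIntegral_norm_gt (by omega)
    (integrable_sExitDiff_mul_kernel hd hα hα2 hx)).const_mul (1 / 2)).const_mul (fracConst d α)
  rw [fracConst_mul_integral_sExitDiff hd hα hα2 hx] at h
  refine h.congr' ?_
  filter_upwards [self_mem_nhdsWithin] with δ hδ
  rw [setIntegral_sExit_sub hd hα ((tnorm_nonneg x).trans_lt hx) hδ]

end SecondDifference

section Remainder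

variable {d : ℕ}

theorem abs_rpow_sub_rpow_le {a u v : ℝ} (ha : 0 ≤ a) (ha1 : a ≤ 1) (hu : 0 ≤ u) (hv : 0 ≤ v) :
    |u ^ a - v ^ a| ≤ |u - v| ^ a := by
  wlog h : v ≤ u generalizing u v
  · rw [abs_sub_comm, abs_sub_comm u v]
    exact this hv hu (not_le.1 h).le
  have h1 : v ^ a ≤ u ^ a := by gcongr
  rw [abs_of_nonneg (sub_nonneg.2 h1), abs_of_nonneg (sub_nonneg.2 h)]
  have := rpow_add_le_add_rpow hv (sub_nonneg.2 h) ha ha1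
  rw [add_sub_cancel] at this
  linarith

theorem abs_max_sq_sub_sub_le {ε p q r : ℝ} (hp : 0 ≤ p) (hq : 0 ≤ q) (hpε : p ≤ ε)
    (h : |q - p| ≤ r) : |max (ε ^ 2 - q ^ 2) 0 - max (ε ^ 2 - p ^ 2) 0| ≤ 2 * ε * r := by
  have h' := abs_le.1 h
  rw [max_eq_left (a := ε ^ 2 - p ^ 2) (by nlinarith)]
  rcases le_total q ε with hqε | hqε
  · rw [max_eq_left (by nlinarith)]
    have e : ε ^ 2 - q ^ 2 - (ε ^ 2 - p ^ 2) = (q + p) * -(q - p) := by ring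
    rw [e, abs_mul, abs_neg, abs_of_nonneg (add_nonneg hq hp)]
    exact mul_le_mul (by linarith) h (abs_nonneg _) (by linarith)
  · rw [max_eq_right (by nlinarith), zero_sub, abs_neg, abs_of_nonneg (by nlinarith)]
    nlinarith [h'.2]

theorem abs_sExit_sub_le {α ε : ℝ} (hd : 2 ≤ d) (hα : 0 < α) (hα2 : α < 2) {x : Ed d}
    (hx : tnorm d x < ε) (z : Ed d) :
    |sExit d α ε (x + z) - sExit d α ε x| ≤ Cexit d α * (2 * ε * ‖z‖) ^ (α / 2) := by
  have hC := Cexit_pos hd hα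
  rw [sExit, sExit, ← mul_sub, abs_mul, abs_of_pos hC]
  refine mul_le_mul_of_nonneg_left ?_ hC.le
  refine (abs_rpow_sub_rpow_le (by linarith) (by linarith) (le_max_right _ _)
    (le_max_right _ _)).trans (rpow_le_rpow (abs_nonneg _) ?_ (by linarith))
  refine abs_max_sq_sub_sub_le (tnorm_nonneg _) (tnorm_nonneg _) hx.le ?_
  simpa using abs_tnorm_sub_le x (x + z)

/-- The part of the first-order expansion of `h s_ε` around `x` that integrates to zero
by symmetry. -/
noncomputable def oddPart (d : ℕ) (α ε : ℝ) (x z : Ed d) : ℝ :=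
  {z : Ed d | ‖z‖ < 1 / 2}.indicator
    (fun z => lastCoord d z * sExit d α ε (x + z) + ⟪tproj d x, z⟫ * sExit d α ε x) z

theorem measurableSet_norm_lt (r : ℝ) : MeasurableSet {z : Ed d | ‖z‖ < r} :=
  measurableSet_lt measurable_norm measurable_const

theorem measurable_oddPart {α ε : ℝ} (x : Ed d) : Measurable (oddPart d α ε x) := by
  have h1 := measurable_sExit (d := d) (α := α) (ε := ε)
  have h2 := (continuous_lastCoord (d := d)).measurable
  refine Measurable.indicator ?_ (measurableSet_norm_lt _)
  fun_prop

theorem setIntegral_eq_zero_of_isometry_odd (T : Ed d ≃ₗᵢ[ℝ] Ed d) (δ : ℝ) {f : Ed d → ℝ}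
    (hf : ∀ z, f (T z) = -f z) : ∫ z in {z : Ed d | δ < ‖z‖}, f z = 0 := by
  have h := setIntegral_norm_gt_comp_isometry T δ f
  simp only [hf, integral_neg] at h
  linarith

theorem sExit_add_reflLast {α ε : ℝ} (x z : Ed d) :
    sExit d α ε (x + reflLast d z) = sExit d α ε (x + z) := by
  rw [sExit, sExit, tnorm_eq_norm_tproj, tnorm_eq_norm_tproj, map_add, map_add, tproj_reflLast]

theorem integrableOn_oddPart_mul_kernel {α ε δ : ℝ} (hd : 2 ≤ d) (hα : 0 < α) (hε : 0 ≤ ε)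
    (hδ : 0 < δ) (x : Ed d) :
    IntegrableOn (fun z => oddPart d α ε x z * ‖z‖ ^ (-(d : ℝ) - α)) {z | δ < ‖z‖} := by
  have hC := Cexit_pos hd hα
  refine integrableOn_mul_kernel (B := (1 + tnorm d x) * (Cexit d α * ε ^ α)) (by omega) hα hδ
    (measurable_oddPart x) fun z => ?_
  have hx := tnorm_nonneg x
  by_cases hz : ‖z‖ < 1 / 2
  · rw [oddPart, indicator_of_mem (show z ∈ {z : Ed d | ‖z‖ < 1 / 2} from hz)]
    refine (abs_add_le _ _).trans ?_
    rw [abs_mul, abs_mul, add_mul]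
    have h1 := abs_lastCoord_le (by omega) z
    have h2 := abs_inner_tproj_le x z
    have h3 := tnorm_le_norm z
    refine add_le_add
      (mul_le_mul (by linarith) (abs_sExit_le hd hα hε _) (abs_nonneg _) zero_le_one)
      (mul_le_mul (h2.trans ?_) (abs_sExit_le hd hα hε _) (abs_nonneg _) hx)
    nlinarith
  · rw [oddPart, indicator_of_notMem (show z ∉ {z : Ed d | ‖z‖ < 1 / 2} from hz), abs_zero]
    positivity

theorem setIntegral_oddPart_mul_kernel {α ε δ : ℝ} (hd : 2 ≤ d) (hα : 0 < α) (hε : 0 ≤ ε)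
    (hδ : 0 < δ) (x : Ed d) :
    ∫ z in {z : Ed d | δ < ‖z‖}, oddPart d α ε x z * ‖z‖ ^ (-(d : ℝ) - α) = 0 := by
  set B := {z : Ed d | ‖z‖ < 1 / 2} with hB
  set f₁ : Ed d → ℝ := fun z => B.indicator (fun z => lastCoord d z * sExit d α ε (x + z)) z *
    ‖z‖ ^ (-(d : ℝ) - α) with hf₁
  set f₂ : Ed d → ℝ := fun z => B.indicator (fun z => ⟪tproj d x, z⟫ * sExit d α ε x) z *
    ‖z‖ ^ (-(d : ℝ) - α) with hf₂
  have hf₂0 : ∫ z in {z : Ed d | δ < ‖z‖}, f₂ z = 0 :=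
    setIntegral_eq_zero_of_isometry_odd (LinearIsometryEquiv.neg ℝ) δ fun z => by
      by_cases hz : ‖z‖ < 2⁻¹ <;> simp [hf₂, hB, indicator, hz]
  have hf₁0 : ∫ z in {z : Ed d | δ < ‖z‖}, f₁ z = 0 :=
    setIntegral_eq_zero_of_isometry_odd (reflLast d) δ fun z => by
      by_cases hz : ‖z‖ < 2⁻¹ <;>
        simp [hf₁, hB, indicator, hz, sExit_add_reflLast, lastCoord_reflLast]
  have hm₂ : Measurable (B.indicator fun z => ⟪tproj d x, z⟫ * sExit d α ε x) :=
    Measurable.indicator (by fun_prop) (measurableSet_norm_lt _)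
  have hi₂ : IntegrableOn f₂ {z : Ed d | δ < ‖z‖} := by
    refine integrableOn_mul_kernel (B := tnorm d x * |sExit d α ε x|) (by omega) hα hδ hm₂
      fun z => ?_
    have hx := tnorm_nonneg x
    by_cases hz : ‖z‖ < 1 / 2
    · rw [indicator_of_mem (show z ∈ B from hz), abs_mul]
      gcongr
      refine (abs_inner_tproj_le x z).trans ?_
      have h3 := tnorm_le_norm z
      nlinarith
    · rw [indicator_of_notMem (show z ∉ B from hz), abs_zero]
      positivity
  have e : ∀ z, oddPart d α ε x z * ‖z‖ ^ (-(d : ℝ) - α) - f₂ z = f₁ z := by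
    intro z
    by_cases hz : ‖z‖ < 2⁻¹
    · simp [hf₁, hf₂, hB, oddPart, indicator, hz]
      ring
    · simp [hf₁, hf₂, hB, oddPart, indicator, hz]
  have h := integral_sub (integrableOn_oddPart_mul_kernel hd hα hε hδ x) hi₂
  simp only [e] at h
  rw [hf₁0, hf₂0] at h
  linarith

/-- The coefficient `c` in `∇h(x) = c x`. -/
noncomputable def gradCoef (d : ℕ) (α : ℝ) (x : Ed d) : ℝ :=
  (α - d) * (‖x‖ ^ 2) ^ ((α - d) / 2 - 1)

/-- The remainder `(h(x+z) - h(x)) s_ε(x+z)` with its odd part removed. -/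
noncomputable def remainder (d : ℕ) (α ε : ℝ) (x z : Ed d) : ℝ :=
  (rieszH d α (x + z) - rieszH d α x) * sExit d α ε (x + z) -
    gradCoef d α x * oddPart d α ε x z

theorem measurable_rieszH {α : ℝ} : Measurable (rieszH d α) := by
  unfold rieszH
  fun_prop

theorem measurable_remainder {α ε : ℝ} (x : Ed d) : Measurable (remainder d α ε x) := by
  have h1 := measurable_sExit (d := d) (α := α) (ε := ε)
  have h2 := measurable_oddPart (α := α) (ε := ε) x
  have h3 := measurable_rieszH (d := d) (α := α)
  unfold remainder
  fun_prop

theorem rieszH_eq_sq_rpow {α : ℝ} (y : Ed d) : rieszH d α y = (‖y‖ ^ 2) ^ ((α - d) / 2) := by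
  rw [rieszH, ← rpow_natCast, ← rpow_mul (norm_nonneg y)]
  congr 1; push_cast; ring

theorem rieszH_nonneg {α : ℝ} (y : Ed d) : 0 ≤ rieszH d α y := rpow_nonneg (norm_nonneg y) _

theorem rieszH_le_one {α : ℝ} (hd : 2 ≤ d) (hα2 : α < 2) {y : Ed d} (hy : 1 ≤ ‖y‖) :
    rieszH d α y ≤ 1 := by
  have hd' : (2 : ℝ) ≤ d := by exact_mod_cast hd
  exact rpow_le_one_of_one_le_of_nonpos hy (by linarith)

theorem one_le_norm_of_mem_hyperF (hd : 0 < d) {x : Ed d} (hx : lastCoord d x = 1) : 1 ≤ ‖x‖ := by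
  have := abs_lastCoord_le hd x
  rwa [hx, abs_one] at this

theorem norm_lt_of_mem_hyperF {ε : ℝ} (hd : 0 < d) (hε : ε < 1 / 20) {x : Ed d}
    (hx : tnorm d x < ε) (hx1 : lastCoord d x = 1) : ‖x‖ < 11 / 10 := by
  have h := norm_sq_eq_tnorm_add hd x
  have h0 := tnorm_nonneg x
  rw [hx1] at h
  refine lt_of_pow_lt_pow_left₀ 2 (by norm_num) ?_
  nlinarith

theorem abs_gradCoef_le {α : ℝ} (hd : 2 ≤ d) (hα2 : α < 2) {x : Ed d}
    (hx : 1 ≤ ‖x‖) : |gradCoef d α x| ≤ |α - d| := by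
  have hd' : (2 : ℝ) ≤ d := by exact_mod_cast hd
  have h : (‖x‖ ^ 2) ^ ((α - d) / 2 - 1) ≤ 1 :=
    rpow_le_one_of_one_le_of_nonpos (one_le_pow₀ hx) (by linarith)
  rw [gradCoef, abs_mul, abs_of_nonneg (a := (‖x‖ ^ 2) ^ ((α - d) / 2 - 1)) (by positivity)]
  exact mul_le_of_le_one_right (abs_nonneg _) h

theorem exists_rieszH_taylor_bound {α : ℝ} (hd : 2 ≤ d) (hα2 : α < 2) :
    ∃ K : ℝ, 0 ≤ K ∧ ∀ x z : Ed d, 1 ≤ ‖x‖ → ‖x‖ < 11 / 10 → ‖z‖ < 1 / 2 →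
      |rieszH d α (x + z) - rieszH d α x - gradCoef d α x * ⟪x, z⟫| ≤ K * ‖z‖ ^ 2 := by
  obtain ⟨K, hK, hT⟩ := exists_rpow_taylor_bound ((α - d) / 2) (m := 1 / 4) (M := 4) (by norm_num)
  refine ⟨9 * K + |α - d|, by positivity, fun x z hx hx' hz => ?_⟩
  have hz0 := norm_nonneg z
  have hu : ‖x‖ ^ 2 ∈ Icc (1 / 4 : ℝ) 4 := ⟨by nlinarith, by nlinarith⟩
  have hy1 : ‖x‖ - ‖z‖ ≤ ‖x + z‖ := by simpa using norm_sub_norm_le x (-z)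
  have hy2 : ‖x + z‖ ≤ ‖x‖ + ‖z‖ := norm_add_le x z
  have hv : ‖x + z‖ ^ 2 ∈ Icc (1 / 4 : ℝ) 4 := ⟨by nlinarith, by nlinarith⟩
  have h := hT _ hu _ hv
  have hsq : ‖x + z‖ ^ 2 - ‖x‖ ^ 2 = 2 * ⟪x, z⟫ + ‖z‖ ^ 2 := by
    rw [norm_add_sq_real]; ring
  have hdiff : (‖x + z‖ ^ 2 - ‖x‖ ^ 2) ^ 2 ≤ 9 * ‖z‖ ^ 2 := by
    have e : (9 : ℝ) * ‖z‖ ^ 2 = (3 * ‖z‖) ^ 2 := by ring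
    rw [e]
    apply sq_le_sq' <;> nlinarith
  rw [← rieszH_eq_sq_rpow, ← rieszH_eq_sq_rpow, hsq] at h
  rw [hsq] at hdiff
  have hc := abs_gradCoef_le hd hα2 hx
  have e : (α - d) / 2 * (‖x‖ ^ 2) ^ ((α - d) / 2 - 1) * (2 * ⟪x, z⟫ + ‖z‖ ^ 2) =
      gradCoef d α x * ⟪x, z⟫ + gradCoef d α x * (‖z‖ ^ 2 / 2) := by
    rw [gradCoef]; ring
  rw [e] at h
  have h2 : |gradCoef d α x * (‖z‖ ^ 2 / 2)| ≤ |α - d| * ‖z‖ ^ 2 := by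
    rw [abs_mul, abs_of_nonneg (a := ‖z‖ ^ 2 / 2) (by positivity)]
    exact mul_le_mul hc (by nlinarith) (by positivity) (abs_nonneg _)
  have h3 : K * (2 * ⟪x, z⟫ + ‖z‖ ^ 2) ^ 2 ≤ 9 * K * ‖z‖ ^ 2 := by
    have := mul_le_mul_of_nonneg_left hdiff hK
    linarith
  rw [abs_le] at h h2 ⊢
  constructor <;> linarith [h.1, h.2, h2.1, h2.2]

theorem exists_abs_remainder_near_le {α : ℝ} (hd : 2 ≤ d) (hα : 0 < α) (hα2 : α < 2) :
    ∃ K : ℝ, 0 ≤ K ∧ ∀ ε ∈ Ioo (0 : ℝ) (1 / 20), ∀ x z : Ed d, tnorm d x < ε →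
      lastCoord d x = 1 → ‖z‖ < 1 / 2 →
      |remainder d α ε x z| ≤ K * ε ^ α * min (‖z‖ ^ (1 + α / 2)) 1 := by
  obtain ⟨K, hK, hT⟩ := exists_rieszH_taylor_bound hd hα2
  have hC := Cexit_pos hd hα
  refine ⟨K * Cexit d α + |α - d| * (Cexit d α * 2), by positivity,
    fun ε hε x z hx hx1 hz => ?_⟩
  have hε0 : 0 < ε := hε.1
  have hd0 : 0 < d := by omega
  have hn1 := one_le_norm_of_mem_hyperF hd0 hx1
  have hz0 := norm_nonneg z
  have hT' := hT x z hn1 (norm_lt_of_mem_hyperF hd0 hε.2 hx hx1) hz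
  have hc := abs_gradCoef_le hd hα2 hn1
  have hin : |⟪tproj d x, z⟫| ≤ ε * ‖z‖ :=
    (abs_inner_tproj_le x z).trans (mul_le_mul hx.le (tnorm_le_norm z) (tnorm_nonneg z) hε0.le)
  have hH := abs_sExit_sub_le hd hα hα2 hx z
  have hs := abs_sExit_le (α := α) hd hα hε0.le (x + z)
  have hp : ‖z‖ ^ 2 ≤ ‖z‖ ^ (1 + α / 2) := by
    rcases hz0.eq_or_lt with h | h
    · rw [← h, zero_rpow (by linarith)]; norm_num
    · rw [← rpow_two]
      exact rpow_le_rpow_of_exponent_ge h (by linarith) (by linarith)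
  have hpow : ε * ‖z‖ * (2 * ε * ‖z‖) ^ (α / 2) ≤ 2 * ε ^ α * ‖z‖ ^ (1 + α / 2) := by
    have e1 : (2 * ε * ‖z‖) ^ (α / 2) = 2 ^ (α / 2) * ε ^ (α / 2) * ‖z‖ ^ (α / 2) := by
      rw [mul_rpow (by positivity) hz0, mul_rpow (by norm_num) hε0.le]
    have e2 : ‖z‖ ^ (1 + α / 2) = ‖z‖ * ‖z‖ ^ (α / 2) := by
      rw [rpow_add_of_nonneg hz0 zero_le_one (by linarith), rpow_one]
    have e3 : ε * ε ^ (α / 2) ≤ ε ^ α := by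
      have : ε * ε ^ (α / 2) = ε ^ (1 + α / 2) := by rw [rpow_add hε0, rpow_one]
      rw [this]
      exact rpow_le_rpow_of_exponent_ge hε0 (by linarith [hε.2]) (by linarith)
    have e4 : (2 : ℝ) ^ (α / 2) ≤ 2 := by
      calc (2 : ℝ) ^ (α / 2) ≤ 2 ^ (1 : ℝ) :=
            rpow_le_rpow_of_exponent_le one_le_two (by linarith)
        _ = 2 := rpow_one 2
    rw [e1, e2]
    calc ε * ‖z‖ * (2 ^ (α / 2) * ε ^ (α / 2) * ‖z‖ ^ (α / 2))
        = 2 ^ (α / 2) * (ε * ε ^ (α / 2)) * (‖z‖ * ‖z‖ ^ (α / 2)) := by ring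
      _ ≤ 2 * ε ^ α * (‖z‖ * ‖z‖ ^ (α / 2)) := by gcongr
  rw [min_eq_left (rpow_le_one hz0 (by linarith) (by linarith))]
  have e : remainder d α ε x z =
      (rieszH d α (x + z) - rieszH d α x - gradCoef d α x * ⟪x, z⟫) * sExit d α ε (x + z) +
      gradCoef d α x * (⟪tproj d x, z⟫ * (sExit d α ε (x + z) - sExit d α ε x)) := by
    rw [remainder, oddPart, indicator_of_mem (show z ∈ {z : Ed d | ‖z‖ < 1 / 2} from hz),
      inner_eq_tproj_add hd0 x z, hx1]
    ring
  rw [e]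
  refine (abs_add_le _ _).trans ?_
  rw [abs_mul, abs_mul, abs_mul]
  have t1 : |rieszH d α (x + z) - rieszH d α x - gradCoef d α x * ⟪x, z⟫| *
      |sExit d α ε (x + z)| ≤ K * ‖z‖ ^ (1 + α / 2) * (Cexit d α * ε ^ α) :=
    mul_le_mul (hT'.trans (mul_le_mul_of_nonneg_left hp hK)) hs (abs_nonneg _) (by positivity)
  have t2 : |⟪tproj d x, z⟫| * |sExit d α ε (x + z) - sExit d α ε x| ≤
      Cexit d α * (2 * ε ^ α * ‖z‖ ^ (1 + α / 2)) :=
    calc _ ≤ ε * ‖z‖ * (Cexit d α * (2 * ε * ‖z‖) ^ (α / 2)) :=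
          mul_le_mul hin hH (abs_nonneg _) (by positivity)
      _ = Cexit d α * (ε * ‖z‖ * (2 * ε * ‖z‖) ^ (α / 2)) := by ring
      _ ≤ _ := by gcongr
  have t3 := mul_le_mul hc t2 (by positivity) (abs_nonneg _)
  linarith

/-- A common dominating function for the remainders. -/
theorem exists_abs_remainder_mul_kernel_le {α : ℝ} (hd : 2 ≤ d) (hα : 0 < α) (hα2 : α < 2) :
    ∃ K : ℝ, 0 ≤ K ∧ ∀ ε ∈ Ioo (0 : ℝ) (1 / 20), ∀ x z : Ed d, tnorm d x < ε →
      lastCoord d x = 1 → |remainder d α ε x z * ‖z‖ ^ (-(d : ℝ) - α)| ≤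
        K * ε ^ α * (min (‖z‖ ^ (1 + α / 2)) 1 * ‖z‖ ^ (-(d : ℝ) - α) +
          (ball (0 : Ed d) 1).indicator (rieszH d α) (x + z)) := by
  obtain ⟨K, hK, hnear⟩ := exists_abs_remainder_near_le hd hα hα2
  have hC := Cexit_pos hd hα
  have hd' : (2 : ℝ) ≤ d := by exact_mod_cast hd
  refine ⟨K + Cexit d α * (8 + 2 ^ (d + α + 2)), by positivity, fun ε hε x z hx hx1 => ?_⟩
  have hε0 : 0 < ε := hε.1
  have hz0 := norm_nonneg z
  have hk0 : 0 ≤ ‖z‖ ^ (-(d : ℝ) - α) := by positivity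
  have hm0 : 0 ≤ min (‖z‖ ^ (1 + α / 2)) 1 := by positivity
  have hi0 : 0 ≤ (ball (0 : Ed d) 1).indicator (rieszH d α) (x + z) :=
    indicator_nonneg (fun y _ => rieszH_nonneg y) _
  rw [abs_mul, abs_of_nonneg hk0]
  by_cases hz : ‖z‖ < 1 / 2
  · calc |remainder d α ε x z| * ‖z‖ ^ (-(d : ℝ) - α)
        ≤ K * ε ^ α * min (‖z‖ ^ (1 + α / 2)) 1 * ‖z‖ ^ (-(d : ℝ) - α) :=
          mul_le_mul_of_nonneg_right (hnear ε hε x z hx hx1 hz) hk0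
      _ = K * ε ^ α * (min (‖z‖ ^ (1 + α / 2)) 1 * ‖z‖ ^ (-(d : ℝ) - α)) := by ring
      _ ≤ _ := by
        refine mul_le_mul ?_ (le_add_of_nonneg_right hi0) (by positivity) (by positivity)
        gcongr
        exact le_add_of_nonneg_right (by positivity)
  · have hz' : 1 / 2 ≤ ‖z‖ := not_lt.1 hz
    have hs := abs_sExit_le (α := α) hd hα hε0.le (x + z)
    have hhx := rieszH_le_one hd hα2 (one_le_norm_of_mem_hyperF (by omega) hx1)
    have hhx0 := rieszH_nonneg (α := α) x
    have hhy0 := rieszH_nonneg (α := α) (x + z)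
    have hR : |remainder d α ε x z| ≤ (rieszH d α (x + z) + 1) * (Cexit d α * ε ^ α) := by
      rw [remainder, oddPart, indicator_of_notMem (show z ∉ {z : Ed d | ‖z‖ < 1 / 2} from hz),
        mul_zero, sub_zero, abs_mul]
      refine mul_le_mul ?_ hs (abs_nonneg _) (by positivity)
      rw [abs_le]; constructor <;> linarith
    have hm : 1 ≤ 4 * min (‖z‖ ^ (1 + α / 2)) 1 := by
      have h1 : (1 / 2 : ℝ) ^ (2 : ℝ) ≤ ‖z‖ ^ (1 + α / 2) :=
        calc (1 / 2 : ℝ) ^ (2 : ℝ) ≤ (1 / 2) ^ (1 + α / 2) :=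
              rpow_le_rpow_of_exponent_ge (by norm_num) (by norm_num) (by linarith)
          _ ≤ ‖z‖ ^ (1 + α / 2) := by gcongr
      rw [rpow_two] at h1
      have h2 : (1 / 4 : ℝ) ≤ min (‖z‖ ^ (1 + α / 2)) 1 := le_min (by linarith) (by norm_num)
      linarith
    have hk : ‖z‖ ^ (-(d : ℝ) - α) ≤ 2 ^ (d + α + 2) := by
      calc ‖z‖ ^ (-(d : ℝ) - α) ≤ (1 / 2 : ℝ) ^ (-(d : ℝ) - α) :=
            rpow_le_rpow_of_nonpos (by norm_num) hz' (by linarith)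
        _ = 2 ^ (d + α) := by
            rw [one_div, inv_rpow zero_le_two, ← rpow_neg zero_le_two]; congr 1; ring
        _ ≤ 2 ^ (d + α + 2) := rpow_le_rpow_of_exponent_le one_le_two (by linarith)
    have hhk : rieszH d α (x + z) * ‖z‖ ^ (-(d : ℝ) - α) ≤
        ‖z‖ ^ (-(d : ℝ) - α) +
          2 ^ (d + α + 2) * (ball (0 : Ed d) 1).indicator (rieszH d α) (x + z) := by
      by_cases hy : ‖x + z‖ < 1
      · rw [indicator_of_mem (by simpa using hy)]
        have := mul_le_mul_of_nonneg_left hk hhy0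
        linarith
      · have := mul_le_mul_of_nonneg_right (rieszH_le_one hd hα2 (not_lt.1 hy)) hk0
        have h2 : 0 ≤ 2 ^ (d + α + 2) * (ball (0 : Ed d) 1).indicator (rieszH d α) (x + z) := by
          positivity
        linarith
    set k := ‖z‖ ^ (-(d : ℝ) - α)
    set m := min (‖z‖ ^ (1 + α / 2)) 1
    set I := (ball (0 : Ed d) 1).indicator (rieszH d α) (x + z)
    set Q : ℝ := 2 ^ (d + α + 2) with hQ
    have hQ0 : 0 < Q := by positivity
    have hkm : k ≤ 4 * (m * k) := by nlinarith
    calc |remainder d α ε x z| * k ≤ (rieszH d α (x + z) + 1) * (Cexit d α * ε ^ α) * k := by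
          gcongr
      _ = Cexit d α * ε ^ α * (rieszH d α (x + z) * k + k) := by ring
      _ ≤ Cexit d α * ε ^ α * ((8 + Q) * (m * k + I)) := by
          gcongr
          have : 0 ≤ Q * (m * k) := by positivity
          nlinarith
      _ = Cexit d α * (8 + Q) * ε ^ α * (m * k + I) := by ring
      _ ≤ (K + Cexit d α * (8 + Q)) * ε ^ α * (m * k + I) := by
          gcongr
          exact le_add_of_nonneg_left hK

theorem integrable_indicator_rieszH {α : ℝ} (hd : 0 < d) (hα : 0 < α) :
    Integrable ((ball (0 : Ed d) 1).indicator (rieszH d α)) := by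
  have : Nonempty (Fin d) := ⟨⟨0, hd⟩⟩
  rw [integrable_indicator_iff measurableSet_ball]
  unfold rieszH
  rw [integrableOn_fun_norm_addHaar volume (f := fun t : ℝ => t ^ (α - d))]
  simp only [finrank_euclideanSpace, Fintype.card_fin, smul_eq_mul]
  have h : IntegrableOn (fun t : ℝ => t ^ (α - 1)) (Ioc 0 1) :=
    (intervalIntegral.intervalIntegrable_rpow' (by linarith)).1
  refine (h.mono_set Ioo_subset_Ioc_self).congr_fun (fun t ht => ?_) measurableSet_Ioo
  simp only
  rw [← rpow_natCast, Nat.cast_pred hd, ← rpow_add ht.1]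
  congr 1; ring

theorem exists_integrable_remainder {α : ℝ} (hd : 2 ≤ d) (hα : 0 < α) (hα2 : α < 2) :
    ∃ C : ℝ, 0 ≤ C ∧ ∀ ε ∈ Ioo (0 : ℝ) (1 / 20), ∀ x : Ed d, tnorm d x < ε →
      lastCoord d x = 1 →
      Integrable (fun z => remainder d α ε x z * ‖z‖ ^ (-(d : ℝ) - α)) ∧
        |∫ z, remainder d α ε x z * ‖z‖ ^ (-(d : ℝ) - α)| ≤ C * ε ^ α := by
  obtain ⟨K, hK, hdom⟩ := exists_abs_remainder_mul_kernel_le hd hα hα2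
  have hd0 : 0 < d := by omega
  have i1 := integrable_min_rpow_mul_kernel hd0 hα (κ := 1 + α / 2) (by linarith)
  have i2 := integrable_indicator_rieszH hd0 hα
  have n1 : 0 ≤ ∫ z : Ed d, min (‖z‖ ^ (1 + α / 2)) 1 * ‖z‖ ^ (-(d : ℝ) - α) :=
    integral_nonneg fun z => by positivity
  have n2 : 0 ≤ ∫ z : Ed d, (ball (0 : Ed d) 1).indicator (rieszH d α) z :=
    integral_nonneg fun z => indicator_nonneg (fun y _ => rieszH_nonneg y) z
  refine ⟨K * ((∫ z : Ed d, min (‖z‖ ^ (1 + α / 2)) 1 * ‖z‖ ^ (-(d : ℝ) - α)) +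
    ∫ z : Ed d, (ball (0 : Ed d) 1).indicator (rieszH d α) z), by positivity,
    fun ε hε x hx hx1 => ?_⟩
  have i3 := i2.comp_add_left x
  have i4 := (i1.add i3).const_mul (K * ε ^ α)
  have hle : ∀ z, ‖remainder d α ε x z * ‖z‖ ^ (-(d : ℝ) - α)‖ ≤
      K * ε ^ α * (min (‖z‖ ^ (1 + α / 2)) 1 * ‖z‖ ^ (-(d : ℝ) - α) +
        (ball (0 : Ed d) 1).indicator (rieszH d α) (x + z)) := fun z => hdom ε hε x z hx hx1
  refine ⟨i4.mono' ((measurable_remainder x).mul measurable_kernel).aestronglyMeasurable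
    (Eventually.of_forall hle), ?_⟩
  refine (norm_integral_le_of_norm_le i4 (Eventually.of_forall hle)).trans (le_of_eq ?_)
  rw [integral_const_mul, ← integral_add_left_eq_self
    (fun z => (ball (0 : Ed d) 1).indicator (rieszH d α) z) x]
  have := integral_add i1 i3
  simp only [Pi.add_apply] at this ⊢
  rw [this]
  ring

theorem rpow_le_omegaFn {α ε : ℝ} (hε : ε ∈ Ioo (0 : ℝ) (1 / 20)) : ε ^ α ≤ omegaFn α ε := by
  have hε0 : 0 < ε := hε.1
  unfold omegaFn
  split_ifs with h1 h2
  · exact le_rfl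
  · rw [h2, rpow_one]
    refine le_mul_of_one_le_right hε0.le ?_
    have h : log ε ≤ -1 := by
      rw [log_le_iff_le_exp hε0]
      have h3 : rexp 1 < 3 := exp_one_lt_three
      have h4 : 0 < rexp 1 := exp_pos 1
      rw [exp_neg, ← one_div, le_div_iff₀ h4]
      nlinarith [hε.2]
    rw [abs_of_neg (by linarith)]
    linarith
  · calc ε ^ α ≤ ε ^ (1 : ℝ) :=
          rpow_le_rpow_of_exponent_ge hε0 (by linarith [hε.2]) (not_lt.1 h1)
      _ = ε := rpow_one ε

end Remainder

/-- `Δ^{α/2}(h s_ε)(x) = -h(x) + O(ω(ε))` for `x ∈ Π_ε ∩ F`. -/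
theorem fracLap_h_sExit (d : ℕ) (hd : 2 ≤ d) (α : ℝ) (hα : 0 < α) (hα2 : α < 2) :
    ∃ C : ℝ, 0 < C ∧ ∀ ε ∈ Set.Ioo (0 : ℝ) (1 / 20), ∀ x ∈ cylPi d ε ∩ hyperF d,
      ∃ L : ℝ, fracLapAt d α (fun y => rieszH d α y * sExit d α ε y) x L ∧
        |L + rieszH d α x| ≤ C * omegaFn α ε := by
  have hd0 : 0 < d := by omega
  obtain ⟨C, hC, hrem⟩ := exists_integrable_remainder hd hα hα2
  refine ⟨|fracConst d α| * C + 1, by positivity, fun ε hε x hx => ?_⟩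
  have hx1 : tnorm d x < ε := hx.1
  obtain ⟨hfi, hbound⟩ := hrem ε hε x hx1 hx.2
  have hε0 : 0 ≤ ε := hε.1.le
  refine ⟨-rieszH d α x + fracConst d α *
    ∫ z, remainder d α ε x z * ‖z‖ ^ (-(d : ℝ) - α), ?_, ?_⟩
  · have hlim := ((tendsto_fracConst_mul_setIntegral_sExit hd hα hα2 hx1).const_mul
      (rieszH d α x)).add ((tendsto_setIntegral_norm_gt hd0 hfi).const_mul (fracConst d α))
    rw [mul_neg_one] at hlim
    refine hlim.congr' ?_
    filter_upwards [self_mem_nhdsWithin] with δ hδ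
    have hδ0 : 0 < δ := hδ
    rw [setIntegral_norm_sub_gt]
    simp only [add_sub_cancel_left]
    have hS : IntegrableOn (fun z => (sExit d α ε (x + z) - sExit d α ε x) *
        ‖z‖ ^ (-(d : ℝ) - α)) {z | δ < ‖z‖} := by
      have hm := measurable_sExit (d := d) (α := α) (ε := ε)
      exact integrableOn_mul_kernel hd0 hα hδ0
        (f := fun z => sExit d α ε (x + z) - sExit d α ε x) (by fun_prop)
        (fun z => (abs_sub _ _).trans (add_le_add (abs_sExit_le hd hα hε0 _)
          (abs_sExit_le hd hα hε0 _)))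
    have hO := integrableOn_oddPart_mul_kernel hd hα hε0 hδ0 x
    have hsplit : ∀ z : Ed d, (rieszH d α (x + z) * sExit d α ε (x + z) -
        rieszH d α x * sExit d α ε x) * ‖z‖ ^ (-(d : ℝ) - α) =
        (rieszH d α x * ((sExit d α ε (x + z) - sExit d α ε x) * ‖z‖ ^ (-(d : ℝ) - α)) +
          remainder d α ε x z * ‖z‖ ^ (-(d : ℝ) - α)) +
        gradCoef d α x * (oddPart d α ε x z * ‖z‖ ^ (-(d : ℝ) - α)) := by
      intro z
      rw [remainder]
      ring
    simp_rw [hsplit]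
    have hSR : IntegrableOn (fun z => rieszH d α x *
        ((sExit d α ε (x + z) - sExit d α ε x) * ‖z‖ ^ (-(d : ℝ) - α)) +
        remainder d α ε x z * ‖z‖ ^ (-(d : ℝ) - α)) {z | δ < ‖z‖} :=
      (hS.const_mul _).add hfi.integrableOn
    rw [integral_add hSR (hO.const_mul _),
      integral_add (hS.const_mul _) hfi.integrableOn, integral_const_mul, integral_const_mul,
      setIntegral_oddPart_mul_kernel hd hα hε0 hδ0 x]
    ring
  · have hω := rpow_le_omegaFn (α := α) hε
    have hp : 0 ≤ ε ^ α := rpow_nonneg hε0 α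
    rw [neg_add_cancel_comm, abs_mul]
    calc |fracConst d α| * |∫ z, remainder d α ε x z * ‖z‖ ^ (-(d : ℝ) - α)|
        ≤ |fracConst d α| * (C * ε ^ α) := by gcongr
      _ ≤ (|fracConst d α| * C + 1) * ε ^ α := by rw [add_mul]; linarith
      _ ≤ (|fracConst d α| * C + 1) * omegaFn α ε := by gcongr
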